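/- arXiv:1805.04466 — 3 statements merged into one kernel-verified Lean document; each statement's English description precedes it below -/
import Mathlib

section
/- Let N ≥ 1 be an integer, α > 0, T > 0, and let u₀ : ℝ^N → [0,∞) be measurable. If there exists a nonnegative integral solution of u_t = Δu + u^{α+1} on (0,T) × ℝ^N with initial value u₀, then for every t ∈ (0,T) one has (αt)^{1/α} · ess sup_{x ∈ ℝ^N} ∫_{ℝ^N} G(t,x,y) u₀(y) dy ≤ 1. -/
open MeasureTheory Real Set Filter ENNReal

/-- The Gaussian heat kernel `G(t,x,y) = (4πt)^{-N/2} exp(-|x-y|²/(4t))` on `ℝ^N`. -/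
noncomputable def heatKernel (N : ℕ) (t : ℝ) (x y : EuclideanSpace ℝ (Fin N)) : ℝ :=
  (4 * π * t) ^ (-(N : ℝ) / 2) * Real.exp (-‖x - y‖ ^ 2 / (4 * t))

lemma hk_nonneg (N : ℕ) {t : ℝ} (ht : 0 < t) (x y : EuclideanSpace ℝ (Fin N)) :
    0 ≤ heatKernel N t x y := by
  unfold heatKernel; positivity

lemma hk_meas (N : ℕ) : Measurable
    (fun p : ℝ × EuclideanSpace ℝ (Fin N) × EuclideanSpace ℝ (Fin N) =>
      heatKernel N p.1 p.2.1 p.2.2) := by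
  unfold heatKernel; fun_prop

lemma hk_mass (N : ℕ) {t : ℝ} (ht : 0 < t) (x : EuclideanSpace ℝ (Fin N)) :
    ∫⁻ y, ENNReal.ofReal (heatKernel N t x y) = 1 := by
  have h1 : ∫ y, heatKernel N t x y = 1 := by
    have h2 := integral_sub_left_eq_self (fun v : EuclideanSpace ℝ (Fin N) =>
      (4 * π * t) ^ (-(N : ℝ) / 2) * Real.exp (-(1 / (4 * t)) * ‖v‖ ^ 2)) volume x
    have h3 : ∀ y, heatKernel N t x y =
        (4 * π * t) ^ (-(N : ℝ) / 2) * Real.exp (-(1 / (4 * t)) * ‖x - y‖ ^ 2) := by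
      intro y; unfold heatKernel; congr 2; ring
    simp_rw [h3]
    rw [h2, integral_const_mul, GaussianFourier.integral_rexp_neg_mul_sq_norm (by positivity)]
    have h4 : π / (1 / (4 * t)) = 4 * π * t := by field_simp
    rw [h4, finrank_euclideanSpace_fin, ← Real.rpow_add (by positivity)]
    rw [neg_div, neg_add_cancel, Real.rpow_zero]
  have hi : Integrable (fun y => heatKernel N t x y) := by
    by_contra hc
    rw [integral_undef hc] at h1
    norm_num at h1
  rw [← ofReal_integral_eq_lintegral_ofReal hi (ae_of_all _ fun y => hk_nonneg N ht x y), h1]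
  simp

lemma hk_mul (N : ℕ) {t s : ℝ} (ht : 0 < t) (hs : 0 < s) (x y z : EuclideanSpace ℝ (Fin N)) :
    heatKernel N t x y * heatKernel N s y z =
      heatKernel N (t + s) x z *
        heatKernel N (t * s / (t + s)) ((s / (t + s)) • x + (t / (t + s)) • z) y := by
  have hts : 0 < t + s := by positivity
  unfold heatKernel
  rw [mul_mul_mul_comm, mul_mul_mul_comm ((4 * π * (t + s)) ^ (-(N : ℝ) / 2)),
    ← Real.mul_rpow (by positivity) (by positivity),
    ← Real.mul_rpow (by positivity) (by positivity), ← Real.exp_add, ← Real.exp_add]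
  congr 2
  · field_simp
  · have e1 : x - z = (x - y) + (y - z) := by abel
    have e2 : (s / (t + s)) • x + (t / (t + s)) • z - y =
        (s / (t + s)) • (x - y) - (t / (t + s)) • (y - z) := by
      have : y = (s / (t + s)) • y + (t / (t + s)) • y := by
        rw [← add_smul, ← add_div, add_comm s t, div_self hts.ne', one_smul]
      nth_rw 1 [this]
      module
    rw [e1, e2]
    generalize x - y = a
    generalize y - z = b
    rw [norm_add_sq_real, norm_sub_sq_real, norm_smul, norm_smul, inner_smul_left,
      inner_smul_right, mul_pow, mul_pow]
    simp only [Real.norm_eq_abs, sq_abs, conj_trivial]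
    field_simp
    ring

lemma hk_semigroup (N : ℕ) {t s : ℝ} (ht : 0 < t) (hs : 0 < s)
    (x z : EuclideanSpace ℝ (Fin N)) :
    ∫⁻ y, ENNReal.ofReal (heatKernel N t x y) * ENNReal.ofReal (heatKernel N s y z) =
      ENNReal.ofReal (heatKernel N (t + s) x z) := by
  have hts : 0 < t + s := by positivity
  have : ∀ y, ENNReal.ofReal (heatKernel N t x y) * ENNReal.ofReal (heatKernel N s y z) =
      ENNReal.ofReal (heatKernel N (t + s) x z) * ENNReal.ofReal
        (heatKernel N (t * s / (t + s)) ((s / (t + s)) • x + (t / (t + s)) • z) y) := by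
    intro y
    rw [← ENNReal.ofReal_mul (hk_nonneg N ht _ _), hk_mul N ht hs,
      ENNReal.ofReal_mul (hk_nonneg N hts _ _)]
  simp_rw [this]
  rw [lintegral_const_mul' _ _ ENNReal.ofReal_ne_top, hk_mass N (by positivity), mul_one]

/-- heat semigroup on extended nonnegative functions -/
noncomputable def heatP (N : ℕ) (t : ℝ) (f : EuclideanSpace ℝ (Fin N) → ℝ≥0∞)
    (x : EuclideanSpace ℝ (Fin N)) : ℝ≥0∞ :=
  ∫⁻ y, ENNReal.ofReal (heatKernel N t x y) * f y

lemma heatP_semigroup (N : ℕ) {t s : ℝ} (ht : 0 < t) (hs : 0 < s)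
    (f : EuclideanSpace ℝ (Fin N) → ℝ≥0∞) (hf : Measurable f) (x : EuclideanSpace ℝ (Fin N)) :
    heatP N t (heatP N s f) x = heatP N (t + s) f x := by
  have hm := hk_meas N
  unfold heatP
  simp_rw [← hk_semigroup N ht hs x]
  have h1 : ∀ y, Measurable fun z => ENNReal.ofReal (heatKernel N s y z) * f z := by
    intro y
    have : Measurable fun z => heatKernel N s y z :=
      hm.comp (f := fun z => (s, y, z)) (by fun_prop)
    fun_prop
  have h2 : ∀ z, Measurable fun y =>
      ENNReal.ofReal (heatKernel N t x y) * ENNReal.ofReal (heatKernel N s y z) := by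
    intro z
    have h3 : Measurable fun y => heatKernel N s y z :=
      hm.comp (f := fun y => (s, y, z)) (by fun_prop)
    have h4 : Measurable fun y => heatKernel N t x y :=
      hm.comp (f := fun y => (t, x, y)) (by fun_prop)
    fun_prop
  simp_rw [← lintegral_const_mul _ (h1 _), ← lintegral_mul_const _ (h2 _)]
  rw [lintegral_lintegral_swap]
  · simp_rw [mul_assoc]
  · have h3 : Measurable fun p : EuclideanSpace ℝ (Fin N) × EuclideanSpace ℝ (Fin N) =>
        ENNReal.ofReal (heatKernel N s p.1 p.2) := by
      refine (hm.comp (g := fun p : ℝ × EuclideanSpace ℝ (Fin N) × EuclideanSpace ℝ (Fin N) =>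
        heatKernel N p.1 p.2.1 p.2.2)
        (f := fun p : EuclideanSpace ℝ (Fin N) × EuclideanSpace ℝ (Fin N) => (s, p.1, p.2))
        ?_).ennreal_ofReal
      fun_prop
    have h4 : Measurable fun y : EuclideanSpace ℝ (Fin N) =>
        ENNReal.ofReal (heatKernel N t x y) := by
      refine (hm.comp (g := fun p : ℝ × EuclideanSpace ℝ (Fin N) × EuclideanSpace ℝ (Fin N) =>
        heatKernel N p.1 p.2.1 p.2.2)
        (f := fun y : EuclideanSpace ℝ (Fin N) => (t, x, y)) ?_).ennreal_ofReal
      fun_prop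
    have h5 := (h4.comp measurable_fst).mul (h3.mul (hf.comp measurable_snd))
    exact h5.aemeasurable

lemma heatP_jensen (N : ℕ) {t : ℝ} (ht : 0 < t) {α : ℝ} (hα : 0 < α)
    (f : EuclideanSpace ℝ (Fin N) → ℝ≥0∞) (hf : Measurable f) (x : EuclideanSpace ℝ (Fin N)) :
    (heatP N t f x) ^ (α + 1) ≤ heatP N t (fun y => f y ^ (α + 1)) x := by
  have hm : Measurable fun y => ENNReal.ofReal (heatKernel N t x y) :=
    ((hk_meas N).comp (f := fun y => (t, x, y)) (by fun_prop)).ennreal_ofReal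
  have hP : IsProbabilityMeasure
      ((volume : Measure (EuclideanSpace ℝ (Fin N))).withDensity
        fun y => ENNReal.ofReal (heatKernel N t x y)) := by
    constructor
    rw [withDensity_apply _ MeasurableSet.univ, Measure.restrict_univ, hk_mass N ht]
  have key := eLpNorm'_le_eLpNorm'_of_exponent_le (f := f) one_pos
    (show (1 : ℝ) ≤ α + 1 by linarith)
    ((volume : Measure (EuclideanSpace ℝ (Fin N))).withDensity
        fun y => ENNReal.ofReal (heatKernel N t x y)) hf.aestronglyMeasurable
  rw [eLpNorm'_eq_lintegral_enorm, eLpNorm'_eq_lintegral_enorm] at key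
  simp only [enorm_eq_self, ENNReal.rpow_one, div_one] at key
  rw [lintegral_withDensity_eq_lintegral_mul _ hm hf,
    lintegral_withDensity_eq_lintegral_mul _ hm (hf.pow_const _)] at key
  have h2 := ENNReal.rpow_le_rpow key (show 0 ≤ α + 1 by linarith)
  rw [← ENNReal.rpow_mul, one_div, inv_mul_cancel₀ (by linarith), ENNReal.rpow_one] at h2
  exact h2

lemma ode_real {α τ A : ℝ} (hα : 0 < α) (hτ : 0 < τ) (hA : 0 < A) (g : ℝ → ℝ)
    (hg : Integrable g) (hg0 : ∀ t, 0 ≤ g t)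
    (h : ∀ᵐ t, t ∈ Ioo 0 τ → (A + ∫ s in (0 : ℝ)..t, g s) ^ (α + 1) ≤ g t) :
    α * τ ≤ A ^ (-α) := by
  set H : ℝ → ℝ := fun t => A + ∫ s in (0 : ℝ)..t, g s with hH
  have hHc : Continuous H := continuous_const.add (hg.continuous_primitive 0)
  have hpc : Continuous fun t => (H t) ^ (α + 1) :=
    hHc.rpow_const fun _ => Or.inr (by linarith)
  set K : ℝ → ℝ := fun t => A + ∫ s in (0 : ℝ)..t, (H s) ^ (α + 1) with hK
  have hKd : ∀ t, HasDerivAt K (H t ^ (α + 1)) t := fun t =>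
    ((hpc.integral_hasStrictDerivAt 0 t).hasDerivAt).const_add A
  have hH0 : ∀ t, 0 ≤ t → 0 ≤ H t := fun t ht =>
    add_nonneg hA.le (intervalIntegral.integral_nonneg ht fun s _ => hg0 s)
  have hKA : ∀ t, 0 ≤ t → A ≤ K t := fun t ht =>
    le_add_of_nonneg_right (intervalIntegral.integral_nonneg ht fun s hs =>
      Real.rpow_nonneg (hH0 s hs.1) _)
  have hKH : ∀ t ∈ Icc 0 τ, K t ≤ H t := by
    intro t ht
    simp only [hK]
    conv_rhs => rw [hH]
    apply add_le_add_right
    apply intervalIntegral.integral_mono_ae_restrict ht.1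
      (hpc.intervalIntegrable _ _) hg.intervalIntegrable
    rw [← restrict_Ioo_eq_restrict_Icc, Filter.EventuallyLE, ae_restrict_iff' measurableSet_Ioo]
    filter_upwards [h] with s hs hs'
    exact hs ⟨hs'.1, hs'.2.trans_le ht.2⟩
  set F : ℝ → ℝ := fun t => K t ^ (-α) + α * t with hF
  have hFd : ∀ t, 0 ≤ t → HasDerivAt F
      (H t ^ (α + 1) * (-α) * K t ^ (-α - 1) + α * 1) t := fun t ht =>
    ((hKd t).rpow_const (Or.inl (hA.trans_le (hKA t ht)).ne')).add
      ((hasDerivAt_id t).const_mul α)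
  have hanti : AntitoneOn F (Icc 0 τ) := by
    apply antitoneOn_of_deriv_nonpos (convex_Icc _ _)
    · exact fun t ht => (hFd t ht.1).continuousAt.continuousWithinAt
    · intro t ht
      rw [interior_Icc] at ht
      exact (hFd t ht.1.le).differentiableAt.differentiableWithinAt
    · intro t ht
      rw [interior_Icc] at ht
      rw [(hFd t ht.1.le).deriv]
      have hKp : 0 < K t := hA.trans_le (hKA t ht.1.le)
      have h1 : K t ^ (α + 1) ≤ H t ^ (α + 1) :=
        Real.rpow_le_rpow hKp.le (hKH t ⟨ht.1.le, ht.2.le⟩) (by linarith)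
      have h2 : K t ^ (α + 1) * K t ^ (-α - 1) = 1 := by
        rw [← Real.rpow_add hKp]; ring_nf; simp
      have h3 : 0 < K t ^ (-α - 1) := Real.rpow_pos_of_pos hKp _
      have h4 : 1 ≤ H t ^ (α + 1) * K t ^ (-α - 1) := by
        exact h2.symm.le.trans (mul_le_mul_of_nonneg_right h1 h3.le)
      nlinarith
  have := hanti (left_mem_Icc.2 hτ.le) (right_mem_Icc.2 hτ.le) hτ.le
  simp only [hF] at this
  have hK0 : K 0 = A := by simp [hK]
  have hp : 0 < K τ ^ (-α) := Real.rpow_pos_of_pos (hA.trans_le (hKA τ hτ.le)) _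
  rw [hK0] at this
  linarith

lemma ode_ennreal {α τ : ℝ} {A : ℝ≥0∞} (hα : 0 < α) (hτ : 0 < τ) (w : ℝ → ℝ≥0∞)
    (hw : Measurable w) (hfin : A + ∫⁻ s in Ioo 0 τ, w s ≠ ⊤)
    (h : ∀ᵐ t, t ∈ Ioo 0 τ → (A + ∫⁻ s in Ioo 0 t, w s) ^ (α + 1) ≤ w t) :
    A ≤ ENNReal.ofReal ((α * τ) ^ (-(1 / α))) := by
  obtain ⟨hAt, hwt⟩ := ENNReal.add_ne_top.1 hfin
  rcases eq_or_ne A 0 with rfl | hA0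
  · exact zero_le
  have hA : 0 < A.toReal := ENNReal.toReal_pos hA0 hAt
  set g : ℝ → ℝ := (Ioo 0 τ).indicator fun t => (w t).toReal with hg
  have hgi : Integrable g := by
    rw [hg, integrable_indicator_iff measurableSet_Ioo]
    exact integrable_toReal_of_lintegral_ne_top hw.aemeasurable hwt
  have hwf : ∀ᵐ t, t ∈ Ioo 0 τ → w t < ⊤ :=
    (ae_restrict_iff' measurableSet_Ioo).1 (ae_lt_top hw hwt)
  have hint : ∀ t ∈ Ioo 0 τ, ∫ s in (0 : ℝ)..t, g s = (∫⁻ s in Ioo 0 t, w s).toReal := by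
    intro t ht
    rw [intervalIntegral.integral_of_le ht.1.le, integral_Ioc_eq_integral_Ioo, ← integral_toReal
      hw.aemeasurable]
    · apply setIntegral_congr_fun measurableSet_Ioo
      intro s hs
      simp only [hg]
      rw [indicator_of_mem (show s ∈ Ioo 0 τ from ⟨hs.1, hs.2.trans ht.2⟩)]
    · rw [ae_restrict_iff' measurableSet_Ioo]
      filter_upwards [hwf] with s h1 h2
      exact h1 ⟨h2.1, h2.2.trans ht.2⟩
  have key := ode_real (α := α) (τ := τ) hα hτ hA g hgi
    (fun t => indicator_nonneg (fun _ _ => ENNReal.toReal_nonneg) t) (by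
      filter_upwards [h, hwf] with t h1 h2 ht
      have hlt : ∫⁻ s in Ioo 0 t, w s ≠ ⊤ := ne_top_of_le_ne_top hwt
        (lintegral_mono_set (Ioo_subset_Ioo_right ht.2.le))
      rw [hint t ht, ← ENNReal.toReal_add hAt hlt, ENNReal.toReal_rpow, hg, indicator_of_mem ht]
      exact ENNReal.toReal_mono (h2 ht).ne (h1 ht))
  rw [← ENNReal.ofReal_toReal hAt]
  apply ENNReal.ofReal_le_ofReal
  have h5 := Real.rpow_le_rpow_of_nonpos (by positivity) key
    (show -(1 / α) ≤ 0 by simp; positivity)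
  rwa [← Real.rpow_mul hA.le, show -α * -(1 / α) = 1 by field_simp, Real.rpow_one] at h5

lemma heatP_meas (N : ℕ) {β : Type*} [MeasurableSpace β] (θ : β → ℝ) (hθ : Measurable θ)
    (ξ : β → EuclideanSpace ℝ (Fin N)) (hξ : Measurable ξ)
    (f : β → EuclideanSpace ℝ (Fin N) → ℝ≥0∞) (hf : Measurable (Function.uncurry f)) :
    Measurable fun b => heatP N (θ b) (f b) (ξ b) := by
  unfold heatP
  have h3 : Measurable fun p : β × EuclideanSpace ℝ (Fin N) =>
      ENNReal.ofReal (heatKernel N (θ p.1) (ξ p.1) p.2) := by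
    refine ((hk_meas N).comp
      (g := fun p : ℝ × EuclideanSpace ℝ (Fin N) × EuclideanSpace ℝ (Fin N) =>
        heatKernel N p.1 p.2.1 p.2.2)
      (f := fun p : β × EuclideanSpace ℝ (Fin N) => (θ p.1, ξ p.1, p.2))
      ?_).ennreal_ofReal
    fun_prop
  exact Measurable.lintegral_prod_right' (h3.mul hf)

lemma heatP_add (N : ℕ) {t : ℝ} (f g : EuclideanSpace ℝ (Fin N) → ℝ≥0∞)
    (hf : Measurable f) (x : EuclideanSpace ℝ (Fin N)) :
    heatP N t (fun y => f y + g y) x = heatP N t f x + heatP N t g x := by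
  unfold heatP
  simp_rw [mul_add]
  have hm : Measurable fun y => ENNReal.ofReal (heatKernel N t x y) :=
    ((hk_meas N).comp (f := fun y => (t, x, y)) (by fun_prop)).ennreal_ofReal
  exact lintegral_add_left (hm.mul hf) _

lemma heatP_congr (N : ℕ) {t : ℝ} (f g : EuclideanSpace ℝ (Fin N) → ℝ≥0∞)
    (h : ∀ᵐ y, f y = g y) (x : EuclideanSpace ℝ (Fin N)) :
    heatP N t f x = heatP N t g x := by
  unfold heatP
  apply lintegral_congr_ae
  filter_upwards [h] with y hy
  rw [hy]

lemma heatP_lintegral (N : ℕ) {r : ℝ} (S : Set ℝ)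
    (f : ℝ → EuclideanSpace ℝ (Fin N) → ℝ≥0∞) (hf : Measurable (Function.uncurry f))
    (x : EuclideanSpace ℝ (Fin N)) :
    heatP N r (fun y => ∫⁻ s in S, f s y) x = ∫⁻ s in S, heatP N r (f s) x := by
  unfold heatP
  have hm : Measurable fun y => ENNReal.ofReal (heatKernel N r x y) :=
    ((hk_meas N).comp (f := fun y => (r, x, y)) (by fun_prop)).ennreal_ofReal
  have h1 : ∀ y, Measurable fun s => f s y := fun y =>
    hf.comp (measurable_id.prodMk measurable_const)
  simp_rw [← lintegral_const_mul _ (h1 _)]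
  rw [lintegral_lintegral_swap]
  have h5 := (hm.comp measurable_fst).mul (hf.comp measurable_swap)
  exact h5.aemeasurable

lemma good_time (N : ℕ) (α T : ℝ) (hα : 0 < α)
    (v₀ : EuclideanSpace ℝ (Fin N) → ℝ≥0∞) (hv₀ : Measurable v₀)
    (v : ℝ → EuclideanSpace ℝ (Fin N) → ℝ≥0∞) (hv : Measurable (Function.uncurry v))
    (hvt : ∀ t x, v t x ≠ ⊤)
    (heq : ∀ᵐ t : ℝ, ∀ᵐ x : EuclideanSpace ℝ (Fin N), t ∈ Ioo 0 T →
      v t x = heatP N t v₀ x +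
        ∫⁻ s in Ioo (0 : ℝ) t, heatP N (t - s) (fun y => v s y ^ (α + 1)) x) :
    ∀ᵐ τ : ℝ, ∀ᵐ x : EuclideanSpace ℝ (Fin N), τ ∈ Ioo 0 T →
      heatP N τ v₀ x ≤ ENNReal.ofReal ((α * τ) ^ (-(1 / α))) := by
  filter_upwards [heq] with τ hτ
  filter_upwards [hτ] with x hx hτT
  specialize hx hτT
  have hvp : Measurable (Function.uncurry fun s y => v s y ^ (α + 1)) := hv.pow_const _
  have hwm : Measurable fun s => (heatP N (τ - s) (v s) x) ^ (α + 1) :=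
    (heatP_meas N (fun s => τ - s) (by fun_prop) (fun _ => x) measurable_const v hv).pow_const _
  have hjen : ∀ t ≤ τ, ∫⁻ s in Ioo 0 t, (heatP N (τ - s) (v s) x) ^ (α + 1) ≤
      ∫⁻ s in Ioo 0 t, heatP N (τ - s) (fun y => v s y ^ (α + 1)) x := by
    intro t ht
    apply setLIntegral_mono' measurableSet_Ioo
    intro s hs
    exact heatP_jensen N (sub_pos.2 (hs.2.trans_le ht)) hα (v s)
      (hv.comp measurable_prodMk_left) x
  apply ode_ennreal hα hτT.1 (fun s => (heatP N (τ - s) (v s) x) ^ (α + 1)) hwm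
  · refine ne_top_of_le_ne_top (hvt τ x) ?_
    rw [hx]
    exact add_le_add_right (hjen τ le_rfl) _
  · filter_upwards [heq] with t h1 ht
    have htT : t ∈ Ioo 0 T := ⟨ht.1, ht.2.trans hτT.2⟩
    have hr : 0 < τ - t := sub_pos.2 ht.2
    have h2 : heatP N (τ - t) (v t) x = heatP N τ v₀ x +
        ∫⁻ s in Ioo 0 t, heatP N (τ - s) (fun y => v s y ^ (α + 1)) x := by
      rw [heatP_congr N (v t) (fun x => heatP N t v₀ x +
        ∫⁻ s in Ioo (0 : ℝ) t, heatP N (t - s) (fun y => v s y ^ (α + 1)) x)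
        (h1.mono fun y hy => hy htT)]
      rw [heatP_add N _ _ (heatP_meas N (fun _ => t) measurable_const (fun y => y) measurable_id
        (fun _ => v₀) (hv₀.comp measurable_snd)),
        heatP_semigroup N hr ht.1 v₀ hv₀, sub_add_cancel,
        heatP_lintegral N _ (fun s x => heatP N (t - s) (fun y => v s y ^ (α + 1)) x)]
      · congr 1
        apply setLIntegral_congr_fun measurableSet_Ioo
        intro s hs
        simp only
        have h3 := heatP_semigroup N hr (sub_pos.2 hs.2) (fun y => v s y ^ (α + 1))
          (hvp.comp (measurable_prodMk_left (x := s))) x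
        rw [show τ - t + (t - s) = τ - s by ring] at h3
        exact h3
      · refine heatP_meas N (β := ℝ × EuclideanSpace ℝ (Fin N)) (fun p => t - p.1) (by fun_prop)
          (fun p => p.2) measurable_snd (fun p y => v p.1 y ^ (α + 1)) ?_
        exact hvp.comp (f := fun q : (ℝ × EuclideanSpace ℝ (Fin N)) × EuclideanSpace ℝ (Fin N) =>
          (q.1.1, q.2)) (by fun_prop)
    rw [h2]
    exact ENNReal.rpow_le_rpow (add_le_add_right (hjen t ht.2.le) _) (by linarith)


/-- If there exists a nonnegative integral solution of
`u_t = Δu + u^{α+1}` on `(0,T) × ℝ^N` with initial value `u₀`, then for every `t ∈ (0,T)`,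
`(αt)^{1/α} · ess sup_x (e^{tΔ}u₀)(x) ≤ 1`. -/
theorem stmt0 (N : ℕ) (hN : 1 ≤ N) (α T : ℝ) (hα : 0 < α) (hT : 0 < T)
    (u₀ : EuclideanSpace ℝ (Fin N) → ℝ) (hu₀m : Measurable u₀) (hu₀ : ∀ x, 0 ≤ u₀ x)
    (u : ℝ → EuclideanSpace ℝ (Fin N) → ℝ)
    (hum : Measurable (Function.uncurry u))
    (hupos : ∀ t ∈ Ioo 0 T, ∀ x, 0 ≤ u t x)
    (heq : ∀ᵐ p : ℝ × EuclideanSpace ℝ (Fin N) ∂volume, p.1 ∈ Ioo 0 T →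
      ENNReal.ofReal (u p.1 p.2) =
        (∫⁻ y, ENNReal.ofReal (heatKernel N p.1 p.2 y * u₀ y)) +
        ∫⁻ s in Ioo (0 : ℝ) p.1, ∫⁻ y,
          ENNReal.ofReal (heatKernel N (p.1 - s) p.2 y * u s y ^ (α + 1))) :
    ∀ t ∈ Ioo 0 T,
      ENNReal.ofReal ((α * t) ^ (1 / α)) *
        essSup (fun x => ∫⁻ y, ENNReal.ofReal (heatKernel N t x y * u₀ y)) volume ≤ 1 := by
  set v₀ : EuclideanSpace ℝ (Fin N) → ℝ≥0∞ := fun y => ENNReal.ofReal (u₀ y) with hv₀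
  have hv₀m : Measurable v₀ := hu₀m.ennreal_ofReal
  have hP0 : ∀ t, 0 < t → ∀ x, (∫⁻ y, ENNReal.ofReal (heatKernel N t x y * u₀ y)) =
      heatP N t v₀ x := by
    intro t ht x
    unfold heatP
    refine lintegral_congr fun y => ?_
    rw [ENNReal.ofReal_mul (hk_nonneg N ht _ _)]
  have heq' := Measure.ae_ae_of_ae_prod heq
  have hgood := good_time N α T hα v₀ hv₀m (fun s y => ENNReal.ofReal (u s y))
    hum.ennreal_ofReal (fun _ _ => ENNReal.ofReal_ne_top) (by
      filter_upwards [heq'] with t ht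
      filter_upwards [ht] with x hx htT
      rw [hx htT, hP0 t htT.1]
      congr 1
      apply setLIntegral_congr_fun measurableSet_Ioo
      intro s hs
      unfold heatP
      refine lintegral_congr fun y => ?_
      simp only
      rw [ENNReal.ofReal_mul (hk_nonneg N (sub_pos.2 hs.2) _ _),
        ENNReal.ofReal_rpow_of_nonneg (hupos s ⟨hs.1, hs.2.trans htT.2⟩ y) (by linarith)])
  intro t ht
  have hbound : ∀ x, heatP N t v₀ x ≤ ENNReal.ofReal ((α * t) ^ (-(1 / α))) := by
    intro x
    have hae : ∀ᵐ τ : ℝ, τ ∈ Ioo 0 t →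
        heatP N t v₀ x ≤ ENNReal.ofReal ((α * τ) ^ (-(1 / α))) := by
      filter_upwards [hgood] with τ hτ hτt
      have hr : 0 < t - τ := sub_pos.2 hτt.2
      have h1 := heatP_semigroup N hr hτt.1 v₀ hv₀m x
      rw [sub_add_cancel] at h1
      rw [← h1]
      calc heatP N (t - τ) (heatP N τ v₀) x
          ≤ ∫⁻ y, ENNReal.ofReal (heatKernel N (t - τ) x y) *
              ENNReal.ofReal ((α * τ) ^ (-(1 / α))) := by
            apply lintegral_mono_ae
            filter_upwards [hτ] with y hy
            gcongr
            exact hy ⟨hτt.1, hτt.2.trans ht.2⟩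
        _ = _ := by
            rw [lintegral_mul_const' _ _ ENNReal.ofReal_ne_top, hk_mass N hr, one_mul]
    have hcont : ContinuousAt (fun τ : ℝ => ENNReal.ofReal ((α * τ) ^ (-(1 / α)))) t := by
      apply ENNReal.continuous_ofReal.continuousAt.comp
      apply ContinuousAt.rpow_const
      · fun_prop
      · left
        have := ht.1
        positivity
    by_contra! hlt
    have hev := hcont.eventually (gt_mem_nhds hlt)
    obtain ⟨l, hl, hls⟩ := exists_Ioc_subset_of_mem_nhds hev ⟨t - 1, by linarith⟩
    have hpos : volume (Ioo (max l 0) t) ≠ 0 := by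
      rw [Real.volume_Ioo]
      have : max l 0 < t := max_lt hl ht.1
      exact (ENNReal.ofReal_pos.2 (sub_pos.2 this)).ne'
    have hz : volume (Ioo (max l 0) t) = 0 := by
      refine measure_mono_null ?_ (ae_iff.1 hae)
      intro τ hτ hc
      have h1 := hc ⟨(le_max_right _ _).trans_lt hτ.1, hτ.2⟩
      have h2 := hls ⟨(le_max_left _ _).trans_lt hτ.1, hτ.2.le⟩
      exact absurd h1 (not_le.2 h2)
    exact hpos hz
  have hαt : 0 < α * t := mul_pos hα ht.1
  have hes : essSup (fun x => ∫⁻ y, ENNReal.ofReal (heatKernel N t x y * u₀ y)) volume ≤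
      ENNReal.ofReal ((α * t) ^ (-(1 / α))) := by
    refine essSup_le_of_ae_le _ ?_
    refine ae_of_all _ fun x => ?_
    exact (hP0 t ht.1 x).le.trans (hbound x)
  calc _ ≤ ENNReal.ofReal ((α * t) ^ (1 / α)) * ENNReal.ofReal ((α * t) ^ (-(1 / α))) := by
        gcongr
    _ = 1 := by
        rw [← ENNReal.ofReal_mul (by positivity), ← Real.rpow_add hαt]
        simp
end

section
/- Let N ≥ 1 be an integer and α, γ, μ > 0. Assume at least one of the following three conditions: (a) γ ≥ N; (b) γ > 2/α; (c) γ = 2/α, α > 2/N, and μ > [α^{1/α} ∫_{ℝ^N} G(1,0,y)|y|^{-2/α} dy]^{-1}. Let x₀ ∈ ℝ^N, δ > 0, and let u₀ : ℝ^N → [0,∞) be measurable with u₀(x) ≥ μ|x - x₀|^{-γ} for almost every x with |x - x₀| ≤ δ. Then limsup_{t ↓ 0} (αt)^{1/α} · ess sup_{x ∈ ℝ^N} ∫_{ℝ^N} G(t,x,y) u₀(y) dy > 1, and consequently for no T > 0 does there exist a nonnegative integral solution of u_t = Δu + u^{α+1} on (0,T) × ℝ^N with initial value u₀. -/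
open MeasureTheory Real Set Filter ENNReal

open scoped Topology

lemma ode_real_s3 {α A t : ℝ} (hα : 0 < α) (hA : 0 < A) (ψ : ℝ → ℝ) (h0 : A ≤ ψ 0)
    (hψ : ∀ a b, 0 ≤ a → a ≤ b → b ≤ t → ψ a + (b - a) * ψ a ^ (α + 1) ≤ ψ b) :
    α * t * A ^ α ≤ 1 := by
  have hpos : ∀ a, 0 ≤ a → a ≤ t → A ≤ ψ a := by
    intro a ha hat
    have := hψ 0 a le_rfl ha hat
    have h2 : 0 ≤ (a - 0) * ψ 0 ^ (α + 1) := by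
      have : 0 ≤ ψ 0 := by linarith
      have : 0 ≤ a - 0 := by linarith
      positivity
    linarith
  have key : ∀ r : ℝ, 1 < r → t * A ^ α * (1 - r ^ (-α)) ≤ r - 1 := by
    intro r hr
    by_contra! hcon
    have hr0 : 0 < r := by linarith
    set q : ℝ := r ^ (-α) with hq
    have hq1 : q < 1 := Real.rpow_lt_one_of_one_lt_of_neg hr (by linarith)
    have hq0 : 0 < q := Real.rpow_pos_of_pos hr0 _
    have hAα : 0 < A ^ α := Real.rpow_pos_of_pos hA _
    let τ : ℕ → ℝ := fun n => (r - 1) * (A ^ α)⁻¹ * ∑ k ∈ Finset.range n, q ^ k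
    have hτt : ∀ n, τ n ≤ t := by
      intro n
      have h1 : ∑ k ∈ Finset.range n, q ^ k ≤ (1 - q)⁻¹ := by
        rw [← tsum_geometric_of_lt_one hq0.le hq1]
        exact (summable_geometric_of_lt_one hq0.le hq1).sum_le_tsum _ (fun i _ => by positivity)
      have h2 : τ n ≤ (r - 1) * (A ^ α)⁻¹ * (1 - q)⁻¹ := by
        have : 0 ≤ (r - 1) * (A ^ α)⁻¹ := by
          have : 0 < r - 1 := by linarith
          positivity
        exact mul_le_mul_of_nonneg_left h1 this
      have h3 : (r - 1) * (A ^ α)⁻¹ * (1 - q)⁻¹ ≤ t := by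
        have : 0 < 1 - q := by linarith
        rw [← div_eq_mul_inv, ← div_eq_mul_inv, div_div, div_le_iff₀ (by positivity)]
        nlinarith
      linarith
    have hτ0 : ∀ n, 0 ≤ τ n := by
      intro n
      have : 0 < r - 1 := by linarith
      have h1 : 0 ≤ ∑ k ∈ Finset.range n, q ^ k := Finset.sum_nonneg (fun i _ => by positivity)
      positivity
    have hstep : ∀ n, τ (n+1) = τ n + (r - 1) * (A ^ α)⁻¹ * q ^ n := by
      intro n
      simp only [τ, Finset.sum_range_succ]; ring
    have hgrow : ∀ n, A * r ^ n ≤ ψ (τ n) := by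
      intro n
      induction n with
      | zero => simpa [τ] using h0
      | succ n ih =>
        have hle : τ n ≤ τ (n+1) := by
          rw [hstep]
          have : 0 < r - 1 := by linarith
          have : 0 ≤ (r - 1) * (A ^ α)⁻¹ * q ^ n := by positivity
          linarith
        have h1 := hψ (τ n) (τ (n+1)) (hτ0 n) hle (hτt _)
        have h2 : (A * r ^ n) ^ (α + 1) ≤ ψ (τ n) ^ (α + 1) :=
          Real.rpow_le_rpow (by positivity) ih (by linarith)
        have h3 : (A * r ^ n) ^ (α + 1) = A ^ α * (q ^ n)⁻¹ * (A * r ^ n) := by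
          rw [Real.rpow_add (by positivity), Real.rpow_one, Real.mul_rpow hA.le (by positivity)]
          congr 2
          rw [hq, Real.rpow_neg hr0.le, inv_pow, inv_inv, ← Real.rpow_natCast, ← Real.rpow_natCast,
            ← Real.rpow_mul hr0.le, ← Real.rpow_mul hr0.le, mul_comm]
        have h4 : τ (n+1) - τ n = (r - 1) * (A ^ α)⁻¹ * q ^ n := by rw [hstep]; ring
        have h5 : (τ (n+1) - τ n) * (A * r ^ n) ^ (α + 1) = (r - 1) * (A * r ^ n) := by
          rw [h3, h4]; field_simp
        have h6 : (τ (n+1) - τ n) * (A * r ^ n) ^ (α + 1) ≤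
            (τ (n+1) - τ n) * ψ (τ n) ^ (α + 1) :=
          mul_le_mul_of_nonneg_left h2 (by linarith)
        have h7 : A * r ^ (n+1) = (A * r ^ n) + (r - 1) * (A * r ^ n) := by ring
        linarith
    obtain ⟨n, hn⟩ := pow_unbounded_of_one_lt (ψ t / A) hr
    have h1 := hψ (τ n) t (hτ0 n) (hτt n) le_rfl
    have h2 := hpos _ (hτ0 n) (hτt n)
    have h3 : 0 ≤ (t - τ n) * ψ (τ n) ^ (α + 1) := by
      have h4 : 0 ≤ t - τ n := by linarith [hτt n]
      have h5 : 0 ≤ ψ (τ n) := by linarith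
      positivity
    rw [div_lt_iff₀ hA] at hn
    have := hgrow n
    linarith
  have hd : HasDerivAt (fun r : ℝ => r ^ (-α)) (-α) 1 := by
    simpa using Real.hasDerivAt_rpow_const (x := 1) (p := -α) (Or.inl one_ne_zero)
  have hs := (hasDerivAt_iff_tendsto_slope.1 hd).mono_left
    (nhdsWithin_mono 1 (show Ioi (1:ℝ) ⊆ {1}ᶜ from fun x hx => ne_of_gt hx))
  have hs2 := (hs.const_mul (-(t * A ^ α)))
  have := le_of_tendsto hs2 (b := 1) (by
    filter_upwards [self_mem_nhdsWithin] with r hr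
    have hr' : (0:ℝ) < r - 1 := sub_pos.2 hr
    have := key r hr
    rw [slope_def_field, Real.one_rpow]
    rw [← mul_div_assoc, div_le_one hr']
    linarith)
  linarith

lemma ode_ennreal_s3 {α t : ℝ} (hα : 0 < α) (ht : 0 < t) (A : ℝ≥0∞) (ψ : ℝ → ℝ≥0∞) (h0 : A ≤ ψ 0)
    (hfin : ψ t ≠ ⊤)
    (hψ : ∀ a b, 0 ≤ a → a ≤ b → b ≤ t → ψ a + ENNReal.ofReal (b - a) * ψ a ^ (α + 1) ≤ ψ b) :
    ENNReal.ofReal ((α * t) ^ (1 / α)) * A ≤ 1 := by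
  have hf : ∀ a, 0 ≤ a → a ≤ t → ψ a ≠ ⊤ := fun a ha hat =>
    ne_top_of_le_ne_top hfin (le_self_add.trans (hψ a t ha hat le_rfl))
  have hAf : A ≠ ⊤ := ne_top_of_le_ne_top (hf 0 le_rfl ht.le) h0
  rcases eq_or_ne A 0 with rfl | hA0
  · simp
  have hA : 0 < A.toReal := ENNReal.toReal_pos hA0 hAf
  have := ode_real_s3 (α := α) (A := A.toReal) (t := t) hα hA (fun s => (ψ s).toReal)
    (ENNReal.toReal_mono (hf 0 le_rfl ht.le) h0) (by
      intro a b ha hab hb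
      have h1 := ENNReal.toReal_mono (hf b (ha.trans hab) hb) (hψ a b ha hab hb)
      have hfa := hf a ha (hab.trans hb)
      rw [ENNReal.toReal_add hfa (ENNReal.mul_ne_top ENNReal.ofReal_ne_top
        (ENNReal.rpow_ne_top_of_nonneg (by linarith) hfa)), ENNReal.toReal_mul,
        ENNReal.toReal_ofReal (by linarith), ← ENNReal.toReal_rpow] at h1
      exact h1)
  rw [← ENNReal.ofReal_toReal hAf, ← ENNReal.ofReal_mul (by positivity), ENNReal.ofReal_le_one]
  have h2 : (α * t * A.toReal ^ α) ^ (1 / α) ≤ 1 :=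
    Real.rpow_le_one (by positivity) this (by positivity)
  rwa [Real.mul_rpow (by positivity) (by positivity), ← Real.rpow_mul hA.le,
    mul_one_div_cancel hα.ne', Real.rpow_one] at h2

lemma fatou_lsc {X E : Type*} [TopologicalSpace X] [FirstCountableTopology X] [MeasurableSpace E]
    (ν : Measure E) (k : X → E → ℝ) (hk : ∀ p, Measurable (k p)) (p₀ : X)
    (hc : ∀ y, ContinuousAt (fun p => k p y) p₀) (c : ℝ≥0∞)
    (h : c < ∫⁻ y, ENNReal.ofReal (k p₀ y) ∂ν) :
    ∀ᶠ p in 𝓝 p₀, c < ∫⁻ y, ENNReal.ofReal (k p y) ∂ν := by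
  have h1 := lintegral_liminf_le (μ := ν) (u := 𝓝 p₀) (f := fun p y => ENNReal.ofReal (k p y))
    (fun p => (hk p).ennreal_ofReal)
  have h2 : ∀ y, liminf (fun p => ENNReal.ofReal (k p y)) (𝓝 p₀) = ENNReal.ofReal (k p₀ y) :=
    fun y => Tendsto.liminf_eq ((ENNReal.continuous_ofReal.tendsto _).comp (hc y))
  simp only [h2] at h1
  exact eventually_lt_of_lt_liminf (h.trans_le h1)

lemma heatKernel_nonneg {N : ℕ} {t : ℝ} (ht : 0 < t) (x y : EuclideanSpace ℝ (Fin N)) :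
    0 ≤ heatKernel N t x y := by
  unfold heatKernel; positivity

lemma heatKernel_pos {N : ℕ} {t : ℝ} (ht : 0 < t) (x y : EuclideanSpace ℝ (Fin N)) :
    0 < heatKernel N t x y := by
  unfold heatKernel; positivity

@[fun_prop]
lemma heatKernel_measurable {N : ℕ} {β : Type*} [MeasurableSpace β] {f : β → ℝ}
    {g h : β → EuclideanSpace ℝ (Fin N)} (hf : Measurable f) (hg : Measurable g)
    (hh : Measurable h) : Measurable (fun b => heatKernel N (f b) (g b) (h b)) := by
  unfold heatKernel; fun_prop

lemma gauss_lintegral {N : ℕ} {c : ℝ} (hc : 0 < c) (m : EuclideanSpace ℝ (Fin N)) :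
    ∫⁻ y : EuclideanSpace ℝ (Fin N), ENNReal.ofReal (rexp (-c * ‖y - m‖ ^ 2)) =
      ENNReal.ofReal ((π / c) ^ ((N : ℝ) / 2)) := by
  rw [lintegral_sub_right_eq_self (fun y => ENNReal.ofReal (rexp (-c * ‖y‖ ^ 2))) m]
  have h := GaussianFourier.integral_rexp_neg_mul_sq_norm (V := EuclideanSpace ℝ (Fin N)) hc
  rw [finrank_euclideanSpace_fin] at h
  rw [← h, ofReal_integral_eq_lintegral_ofReal]
  · by_contra hcon
    rw [integral_undef hcon] at h
    have : 0 < (π / c) ^ ((N : ℝ) / 2) := by positivity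
    linarith
  · exact ae_of_all _ fun y => (Real.exp_pos _).le

lemma heatKernel_mass {N : ℕ} {t : ℝ} (ht : 0 < t) (x : EuclideanSpace ℝ (Fin N)) :
    ∫⁻ y, ENNReal.ofReal (heatKernel N t x y) = 1 := by
  have h : ∀ y, ENNReal.ofReal (heatKernel N t x y) =
      ENNReal.ofReal ((4 * π * t) ^ (-(N : ℝ) / 2)) *
        ENNReal.ofReal (rexp (-(1 / (4 * t)) * ‖y - x‖ ^ 2)) := by
    intro y
    rw [← ENNReal.ofReal_mul (by positivity), heatKernel, norm_sub_rev]
    congr 3; ring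
  simp_rw [h]
  rw [lintegral_const_mul _ (by fun_prop), gauss_lintegral (by positivity),
    ← ENNReal.ofReal_mul (by positivity), ENNReal.ofReal_eq_one]
  have : π / (1 / (4 * t)) = 4 * π * t := by field_simp
  rw [this, ← Real.rpow_add (by positivity), neg_div, neg_add_cancel, Real.rpow_zero]

lemma heatKernel_chapman {N : ℕ} {a b : ℝ} (ha : 0 < a) (hb : 0 < b)
    (x z : EuclideanSpace ℝ (Fin N)) :
    ∫⁻ y, ENNReal.ofReal (heatKernel N a x y) * ENNReal.ofReal (heatKernel N b y z) =
      ENNReal.ofReal (heatKernel N (a + b) x z) := by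
  set m : EuclideanSpace ℝ (Fin N) := (b / (a + b)) • x + (a / (a + b)) • z with hm
  have hab : 0 < a + b := by positivity
  have hsq : ∀ y, -‖x - y‖ ^ 2 / (4 * a) + -‖y - z‖ ^ 2 / (4 * b) =
      -‖x - z‖ ^ 2 / (4 * (a + b)) + -((a + b) / (4 * a * b)) * ‖y - m‖ ^ 2 := by
    intro y
    obtain ⟨p, hp⟩ : ∃ p, p = x - y := ⟨_, rfl⟩
    obtain ⟨q, hq⟩ : ∃ q, q = y - z := ⟨_, rfl⟩
    have h1 : x - z = p + q := by rw [hp, hq]; abel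
    have h2 : y - m = (a / (a + b)) • q - (b / (a + b)) • p := by
      have hx : x = p + y := by rw [hp]; abel
      have hz : z = y - q := by rw [hq]; abel
      have h3 : y = (b / (a + b)) • y + (a / (a + b)) • y := by
        rw [← add_smul, ← add_div, add_comm b a, div_self hab.ne', one_smul]
      rw [hm, hx, hz, smul_add, smul_sub]
      nth_rewrite 1 [h3]
      abel
    rw [← hp, ← hq, h1, h2, norm_add_sq_real, norm_sub_sq_real, norm_smul, norm_smul,
      inner_smul_left, inner_smul_right, real_inner_comm p q, mul_pow, mul_pow,
      Real.norm_eq_abs, Real.norm_eq_abs, sq_abs, sq_abs]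
    simp only [conj_trivial]
    field_simp
    ring
  have h : ∀ y, ENNReal.ofReal (heatKernel N a x y) * ENNReal.ofReal (heatKernel N b y z) =
      ENNReal.ofReal ((4 * π * a) ^ (-(N : ℝ) / 2) * (4 * π * b) ^ (-(N : ℝ) / 2) *
        rexp (-‖x - z‖ ^ 2 / (4 * (a + b)))) *
        ENNReal.ofReal (rexp (-((a + b) / (4 * a * b)) * ‖y - m‖ ^ 2)) := by
    intro y
    rw [← ENNReal.ofReal_mul (heatKernel_nonneg ha _ _), ← ENNReal.ofReal_mul (by positivity),
      mul_assoc _ (rexp _), ← Real.exp_add, ← hsq, Real.exp_add]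
    unfold heatKernel
    congr 1; ring
  simp_rw [h]
  rw [lintegral_const_mul _ (by fun_prop), gauss_lintegral (by positivity),
    ← ENNReal.ofReal_mul (by positivity)]
  congr 1
  unfold heatKernel
  have h5 : (4 * π * (a + b)) ^ (-(N : ℝ) / 2) = (4 * π * a) ^ (-(N : ℝ) / 2) *
      (4 * π * b) ^ (-(N : ℝ) / 2) * (π / ((a + b) / (4 * a * b))) ^ ((N : ℝ) / 2) := by
    have h6 : (π / ((a + b) / (4 * a * b))) ^ ((N : ℝ) / 2) =
        (((a + b) / (4 * a * b)) / π) ^ (-(N : ℝ) / 2) := by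
      rw [neg_div, Real.rpow_neg (by positivity), ← Real.inv_rpow (by positivity), inv_div]
    rw [h6, ← Real.mul_rpow (by positivity) (by positivity),
      ← Real.mul_rpow (by positivity) (by positivity)]
    congr 1; field_simp
  rw [h5]; ring

lemma heat_semigroup {N : ℕ} {a b : ℝ} (ha : 0 < a) (hb : 0 < b) (x : EuclideanSpace ℝ (Fin N))
    (f : EuclideanSpace ℝ (Fin N) → ℝ≥0∞) (hf : Measurable f) :
    ∫⁻ y, ENNReal.ofReal (heatKernel N a x y) *
      ∫⁻ z, ENNReal.ofReal (heatKernel N b y z) * f z =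
    ∫⁻ z, ENNReal.ofReal (heatKernel N (a + b) x z) * f z := by
  have h : ∀ y, ENNReal.ofReal (heatKernel N a x y) *
      ∫⁻ z, ENNReal.ofReal (heatKernel N b y z) * f z =
      ∫⁻ z, ENNReal.ofReal (heatKernel N a x y) * ENNReal.ofReal (heatKernel N b y z) * f z := by
    intro y
    rw [← lintegral_const_mul _ (by fun_prop)]
    simp_rw [mul_assoc]
  simp_rw [h]
  rw [lintegral_lintegral_swap (by unfold Function.uncurry; fun_prop)]
  refine lintegral_congr fun z => ?_
  rw [lintegral_mul_const _ (by fun_prop), heatKernel_chapman ha hb]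

lemma heat_jensen {N : ℕ} {t p : ℝ} (ht : 0 < t) (hp : 1 < p) (x : EuclideanSpace ℝ (Fin N))
    (f : EuclideanSpace ℝ (Fin N) → ℝ≥0∞) (hf : Measurable f) :
    (∫⁻ y, ENNReal.ofReal (heatKernel N t x y) * f y) ^ p ≤
    ∫⁻ y, ENNReal.ofReal (heatKernel N t x y) * f y ^ p := by
  have hp0 : 0 < p := by linarith
  have hm : Measurable (fun y => ENNReal.ofReal (heatKernel N t x y)) := by fun_prop
  have h := ENNReal.lintegral_mul_le_Lp_mul_Lq
    (volume.withDensity (fun y => ENNReal.ofReal (heatKernel N t x y)))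
    (Real.HolderConjugate.conjExponent hp) (f := f) (g := fun _ => 1) hf.aemeasurable
    aemeasurable_const
  simp only [Pi.mul_apply, mul_one, ENNReal.one_rpow, lintegral_one,
    withDensity_apply _ MeasurableSet.univ, Measure.restrict_univ, heatKernel_mass ht] at h
  rw [lintegral_withDensity_eq_lintegral_mul _ hm hf,
    lintegral_withDensity_eq_lintegral_mul _ hm (by fun_prop)] at h
  have h2 := ENNReal.rpow_le_rpow h hp0.le
  rwa [← ENNReal.rpow_mul, one_div_mul_cancel hp0.ne', ENNReal.rpow_one] at h2

lemma heatKernel_continuousAt {N : ℕ} {p : ℝ × EuclideanSpace ℝ (Fin N)} (hp : 0 < p.1)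
    (y : EuclideanSpace ℝ (Fin N)) :
    ContinuousAt (fun p : ℝ × EuclideanSpace ℝ (Fin N) => heatKernel N p.1 p.2 y) p := by
  unfold heatKernel
  have h1 : 4 * π * p.1 ≠ 0 := by positivity
  have h2 : 4 * p.1 ≠ 0 := by positivity
  refine ContinuousAt.mul (ContinuousAt.rpow_const (by fun_prop) (Or.inl h1)) ?_
  exact ContinuousAt.rexp (ContinuousAt.div (by fun_prop) (by fun_prop) h2)

lemma sol_phi {N : ℕ} {β t s : ℝ} (hs0 : 0 < s) (hst : s < t)
    (V : EuclideanSpace ℝ (Fin N) → ℝ≥0∞) (hV : Measurable V)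
    (W : ℝ → EuclideanSpace ℝ (Fin N) → ℝ≥0∞) (hW : Measurable (Function.uncurry W))
    (x : EuclideanSpace ℝ (Fin N))
    (hs : ∀ᵐ y : EuclideanSpace ℝ (Fin N),
      W s y = (∫⁻ z, ENNReal.ofReal (heatKernel N s y z) * V z) +
        ∫⁻ σ in Ioo (0 : ℝ) s, ∫⁻ z,
            ENNReal.ofReal (heatKernel N (s - σ) y z) * W σ z ^ β) :
    ∫⁻ y, ENNReal.ofReal (heatKernel N (t - s) x y) * W s y =
      (∫⁻ y, ENNReal.ofReal (heatKernel N t x y) * V y) + ∫⁻ σ in Ioo (0 : ℝ) s, ∫⁻ z,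
            ENNReal.ofReal (heatKernel N (t - σ) x z) * W σ z ^ β := by
  have hWs : ∀ s, Measurable (W s) := fun s => hW.of_uncurry_left
  have hts : 0 < t - s := sub_pos.2 hst
  have h1 : ∫⁻ y, ENNReal.ofReal (heatKernel N (t - s) x y) * W s y =
    ∫⁻ y, (ENNReal.ofReal (heatKernel N (t - s) x y) *
        (∫⁻ z, ENNReal.ofReal (heatKernel N s y z) * V z) +
      ENNReal.ofReal (heatKernel N (t - s) x y) * ∫⁻ σ in Ioo (0 : ℝ) s, ∫⁻ z,
          ENNReal.ofReal (heatKernel N (s - σ) y z) * W σ z ^ β) := by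
    refine lintegral_congr_ae ?_
    filter_upwards [hs] with y hy
    rw [hy, mul_add]
  have hWα : Measurable (fun q : (ℝ × EuclideanSpace ℝ (Fin N)) × EuclideanSpace ℝ (Fin N) =>
      W q.1.1 q.2 ^ β) :=
    (hW.comp (by fun_prop : Measurable (fun q : (ℝ × EuclideanSpace ℝ (Fin N)) ×
      EuclideanSpace ℝ (Fin N) => (q.1.1, q.2)))).pow_const _
  have hin : Measurable (fun q : ℝ × EuclideanSpace ℝ (Fin N) =>
      ∫⁻ z, ENNReal.ofReal (heatKernel N (s - q.1) q.2 z) * W q.1 z ^ β) := by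
    have hk : Measurable (fun q : (ℝ × EuclideanSpace ℝ (Fin N)) × EuclideanSpace ℝ (Fin N) =>
      ENNReal.ofReal (heatKernel N (s - q.1.1) q.1.2 q.2)) := by fun_prop
    exact Measurable.lintegral_prod_right' (ν := volume) (hk.mul hWα)
  have hmV : Measurable (fun y => ENNReal.ofReal (heatKernel N (t - s) x y) *
        (∫⁻ z, ENNReal.ofReal (heatKernel N s y z) * V z)) := by
    refine Measurable.mul (by fun_prop) ?_
    have hk : Measurable (fun q : EuclideanSpace ℝ (Fin N) × EuclideanSpace ℝ (Fin N) =>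
      ENNReal.ofReal (heatKernel N s q.1 q.2) * V q.2) := by fun_prop
    exact Measurable.lintegral_prod_right' (ν := volume) hk
  rw [h1, lintegral_add_left hmV, heat_semigroup hts hs0 x V hV, sub_add_cancel]
  congr 1
  obtain ⟨g, hgm, hg⟩ : ∃ g : ℝ × EuclideanSpace ℝ (Fin N) → ℝ≥0∞, Measurable g ∧
      ∀ σ y, ∫⁻ z, ENNReal.ofReal (heatKernel N (s - σ) y z) * W σ z ^ β = g (σ, y) :=
    ⟨_, hin, fun σ y => rfl⟩
  simp_rw [hg]
  have h2 : ∀ y, ENNReal.ofReal (heatKernel N (t - s) x y) * ∫⁻ σ in Ioo (0 : ℝ) s, g (σ, y) =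
      ∫⁻ σ in Ioo (0 : ℝ) s, ENNReal.ofReal (heatKernel N (t - s) x y) * g (σ, y) := by
    intro y
    rw [lintegral_const_mul _ (by fun_prop)]
  simp_rw [h2]
  have hm : Measurable (fun q : EuclideanSpace ℝ (Fin N) × ℝ =>
      ENNReal.ofReal (heatKernel N (t - s) x q.1) * g (q.2, q.1)) := by fun_prop
  rw [lintegral_lintegral_swap (f := fun y σ =>
    ENNReal.ofReal (heatKernel N (t - s) x y) * g (σ, y)) hm.aemeasurable]
  refine setLIntegral_congr_fun measurableSet_Ioo fun σ hσ => ?_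
  simp_rw [← hg]
  rw [heat_semigroup hts (sub_pos.2 hσ.2) x (fun z => W σ z ^ β)
      ((hWs σ).pow_const _), sub_add_sub_cancel]

lemma sol_ae_bound {N : ℕ} {α T : ℝ} (hα : 0 < α)
    (u₀ : EuclideanSpace ℝ (Fin N) → ℝ) (hu₀m : Measurable u₀)
    (u : ℝ → EuclideanSpace ℝ (Fin N) → ℝ) (hum : Measurable (Function.uncurry u))
    (hu : ∀ t ∈ Ioo 0 T, ∀ x, 0 ≤ u t x)
    (hsol : ∀ᵐ p : ℝ × EuclideanSpace ℝ (Fin N) ∂volume, p.1 ∈ Ioo 0 T →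
        ENNReal.ofReal (u p.1 p.2) =
          (∫⁻ y, ENNReal.ofReal (heatKernel N p.1 p.2 y * u₀ y)) +
          ∫⁻ s in Ioo (0 : ℝ) p.1, ∫⁻ y,
            ENNReal.ofReal (heatKernel N (p.1 - s) p.2 y * u s y ^ (α + 1))) :
    ∀ᵐ p : ℝ × EuclideanSpace ℝ (Fin N) ∂volume, p.1 ∈ Ioo 0 T →
      ENNReal.ofReal ((α * p.1) ^ (1 / α)) *
        (∫⁻ y, ENNReal.ofReal (heatKernel N p.1 p.2 y * u₀ y)) ≤ 1 := by
  let V : EuclideanSpace ℝ (Fin N) → ℝ≥0∞ := fun y => ENNReal.ofReal (u₀ y)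
  let W : ℝ → EuclideanSpace ℝ (Fin N) → ℝ≥0∞ := fun s y => ENNReal.ofReal (u s y)
  have hV : Measurable V := by fun_prop
  have hW : Measurable (Function.uncurry W) := hum.ennreal_ofReal
  have hWs : ∀ s, Measurable (W s) := fun s => hW.of_uncurry_left
  have hsol' : ∀ᵐ p : ℝ × EuclideanSpace ℝ (Fin N) ∂volume, p.1 ∈ Ioo 0 T →
      W p.1 p.2 = (∫⁻ y, ENNReal.ofReal (heatKernel N p.1 p.2 y) * V y) +
        ∫⁻ s in Ioo (0 : ℝ) p.1, ∫⁻ y,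
            ENNReal.ofReal (heatKernel N (p.1 - s) p.2 y) * W s y ^ (α + 1) := by
    filter_upwards [hsol] with p hp hpT
    refine (hp hpT).trans ?_
    congr 1
    · exact lintegral_congr fun y => ENNReal.ofReal_mul (heatKernel_nonneg hpT.1 _ _)
    · refine setLIntegral_congr_fun measurableSet_Ioo fun s hs => ?_
      refine lintegral_congr fun y => ?_
      rw [ENNReal.ofReal_mul (heatKernel_nonneg (sub_pos.2 hs.2) _ _),
        ENNReal.ofReal_rpow_of_nonneg (hu s ⟨hs.1, hs.2.trans hpT.2⟩ y) (by linarith)]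
  have hae : ∀ᵐ s : ℝ, ∀ᵐ y : EuclideanSpace ℝ (Fin N), s ∈ Ioo 0 T →
      W s y = (∫⁻ z, ENNReal.ofReal (heatKernel N s y z) * V z) +
        ∫⁻ σ in Ioo (0 : ℝ) s, ∫⁻ z,
            ENNReal.ofReal (heatKernel N (s - σ) y z) * W σ z ^ (α + 1) := by
    have := hsol'
    rw [Measure.volume_eq_prod] at this
    exact Measure.ae_ae_of_ae_prod this
  filter_upwards [hsol'] with ⟨t, x⟩ hp hpT
  specialize hp hpT
  simp only at hp hpT ⊢
  have ht : 0 < t := hpT.1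
  have hA : ∫⁻ y, ENNReal.ofReal (heatKernel N t x y * u₀ y) =
      ∫⁻ y, ENNReal.ofReal (heatKernel N t x y) * V y :=
    lintegral_congr fun y => ENNReal.ofReal_mul (heatKernel_nonneg hpT.1 _ _)
  rw [hA]
  set A := ∫⁻ y, ENNReal.ofReal (heatKernel N t x y) * V y with hAdef
  let h : ℝ → ℝ≥0∞ := fun s => ∫⁻ y, ENNReal.ofReal (heatKernel N (t - s) x y) * W s y ^ (α + 1)
  let ψ : ℝ → ℝ≥0∞ := fun r => A + ∫⁻ s in Ioo 0 r, h s
  have hψmono : Monotone ψ := fun a b hab => by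
    have h0 : Ioo (0:ℝ) a ⊆ Ioo 0 b := Ioo_subset_Ioo_right hab
    have := lintegral_mono_set (μ := volume) (f := h) h0
    exact add_le_add_right this A
  have hφ : ∀ᵐ s : ℝ, s ∈ Ioo 0 t →
      ∫⁻ y, ENNReal.ofReal (heatKernel N (t - s) x y) * W s y = ψ s := by
    filter_upwards [hae] with s hs hst
    exact sol_phi hst.1 hst.2 V hV W hW x (hs.mono fun y hy => hy ⟨hst.1, hst.2.trans hpT.2⟩)
  refine ode_ennreal_s3 hα ht A ψ le_self_add ?_ ?_
  · change A + ∫⁻ s in Ioo 0 t, h s ≠ ⊤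
    rw [← hp]
    exact ENNReal.ofReal_ne_top
  · intro a b ha hab hbt
    have h1 : (∫⁻ s in Ioo 0 a, h s) + (∫⁻ s in Ioo a b, h s) ≤ ∫⁻ s in Ioo 0 b, h s := by
      rw [← lintegral_union measurableSet_Ioo]
      · refine lintegral_mono_set (union_subset (Ioo_subset_Ioo_right hab)
          (Ioo_subset_Ioo_left ha))
      · rw [Set.disjoint_left]
        intro s hs hs'
        exact lt_asymm hs.2 hs'.1
    have h2 : ENNReal.ofReal (b - a) * ψ a ^ (α + 1) ≤ ∫⁻ s in Ioo a b, h s := by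
      calc _ = ∫⁻ s in Ioo a b, ψ a ^ (α + 1) := by
            rw [setLIntegral_const, Real.volume_Ioo, mul_comm]
        _ ≤ _ := by
            refine setLIntegral_mono_ae' measurableSet_Ioo ?_
            filter_upwards [hφ] with s hs hsab
            have hst : s ∈ Ioo 0 t := ⟨ha.trans_lt hsab.1, hsab.2.trans_le hbt⟩
            calc ψ a ^ (α + 1) ≤ ψ s ^ (α + 1) :=
                  ENNReal.rpow_le_rpow (hψmono hsab.1.le) (by linarith)
              _ ≤ h s := by
                  rw [← hs hst]
                  exact heat_jensen (sub_pos.2 hst.2) (by linarith) x (W s) (hWs s)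
    calc ψ a + ENNReal.ofReal (b - a) * ψ a ^ (α + 1)
        ≤ (A + ∫⁻ s in Ioo 0 a, h s) + ∫⁻ s in Ioo a b, h s := by
          exact add_le_add_right h2 _
      _ ≤ ψ b := by
          rw [add_assoc]
          exact add_le_add_right h1 _

lemma sol_bound {N : ℕ} {α T : ℝ} (hα : 0 < α)
    (u₀ : EuclideanSpace ℝ (Fin N) → ℝ) (hu₀m : Measurable u₀)
    (hae : ∀ᵐ p : ℝ × EuclideanSpace ℝ (Fin N) ∂volume, p.1 ∈ Ioo 0 T →
      ENNReal.ofReal ((α * p.1) ^ (1 / α)) *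
        (∫⁻ y, ENNReal.ofReal (heatKernel N p.1 p.2 y * u₀ y)) ≤ 1)
    (t : ℝ) (ht : t ∈ Ioo 0 T) (x : EuclideanSpace ℝ (Fin N)) :
    ENNReal.ofReal ((α * t) ^ (1 / α)) *
        (∫⁻ y, ENNReal.ofReal (heatKernel N t x y * u₀ y)) ≤ 1 := by
  have hpull : ∀ p : ℝ × EuclideanSpace ℝ (Fin N), 0 < p.1 →
      ENNReal.ofReal ((α * p.1) ^ (1 / α)) *
        (∫⁻ y, ENNReal.ofReal (heatKernel N p.1 p.2 y * u₀ y)) =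
      ∫⁻ y, ENNReal.ofReal ((α * p.1) ^ (1 / α) * (heatKernel N p.1 p.2 y * u₀ y)) := by
    intro p hp
    rw [← lintegral_const_mul _ (by fun_prop)]
    exact lintegral_congr fun y => (ENNReal.ofReal_mul (by positivity)).symm
  by_contra! hcon
  rw [hpull (t, x) ht.1] at hcon
  have hev := fatou_lsc volume (fun (p : ℝ × EuclideanSpace ℝ (Fin N)) y =>
    (α * p.1) ^ (1 / α) * (heatKernel N p.1 p.2 y * u₀ y)) (fun p => by fun_prop) (t, x)
    (fun y => by
      refine ContinuousAt.mul (ContinuousAt.rpow_const (by fun_prop)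
        (Or.inr (by positivity))) (ContinuousAt.mul ?_ continuousAt_const)
      exact heatKernel_continuousAt ht.1 y) 1 hcon
  have hT : ∀ᶠ p : ℝ × EuclideanSpace ℝ (Fin N) in 𝓝 (t, x), p.1 ∈ Ioo 0 T :=
    continuousAt_fst.eventually (Ioo_mem_nhds ht.1 ht.2)
  have hpos := MeasureTheory.Measure.measure_pos_of_mem_nhds volume (hev.and hT)
  refine hpos.ne' (measure_mono_null ?_ (ae_iff.1 hae))
  rintro p ⟨hp1, hp2⟩ hp3
  have := hp3 hp2
  rw [hpull p hp2.1] at this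
  exact absurd this (not_le.2 hp1)

lemma le_essSup_heat {N : ℕ} {t : ℝ} (ht : 0 < t)
    (u₀ : EuclideanSpace ℝ (Fin N) → ℝ) (hu₀m : Measurable u₀) (x : EuclideanSpace ℝ (Fin N)) :
    ∫⁻ y, ENNReal.ofReal (heatKernel N t x y * u₀ y) ≤
      essSup (fun x => ∫⁻ y, ENNReal.ofReal (heatKernel N t x y * u₀ y)) volume := by
  refine le_of_forall_lt fun c hc => ?_
  obtain ⟨d, hcd, hd⟩ := exists_between hc
  refine hcd.trans_le ?_
  by_contra! hcon
  have hev := fatou_lsc volume (fun x y => heatKernel N t x y * u₀ y) (fun p => by fun_prop) x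
    (fun y => by
      refine ContinuousAt.mul ?_ continuousAt_const
      exact (heatKernel_continuousAt (p := (t, x)) ht y).comp
        (f := fun x => (t, x)) (by fun_prop)) d hd
  have hpos := MeasureTheory.Measure.measure_pos_of_mem_nhds volume hev
  refine hpos.ne' (measure_mono_null ?_ (ae_iff.1 (ae_lt_of_essSup_lt hcon)))
  intro p hp
  exact not_lt.2 (le_of_lt hp)

/-- Truncated self-similar integral. -/
noncomputable def heatI (N : ℕ) (γ R : ℝ) : ℝ≥0∞ :=
  ∫⁻ z in Metric.ball (0 : EuclideanSpace ℝ (Fin N)) R,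
    ENNReal.ofReal (heatKernel N 1 0 z * ‖z‖ ^ (-γ))

lemma lower_heat {N : ℕ} {γ μ δ ρ R : ℝ} (hμ : 0 < μ) (hρ : 0 < ρ) (hR : ρ * R ≤ δ)
    (x₀ : EuclideanSpace ℝ (Fin N))
    (u₀ : EuclideanSpace ℝ (Fin N) → ℝ)
    (hlow : ∀ᵐ x ∂volume, ‖x - x₀‖ ≤ δ → μ * ‖x - x₀‖ ^ (-γ) ≤ u₀ x) :
    ENNReal.ofReal (μ * ρ ^ (-γ)) * heatI N γ R ≤
      ∫⁻ y, ENNReal.ofReal (heatKernel N (ρ ^ 2) x₀ y * u₀ y) := by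
  let g : EuclideanSpace ℝ (Fin N) → ℝ≥0∞ :=
    (Metric.ball (0 : EuclideanSpace ℝ (Fin N)) R).indicator
      (fun z => ENNReal.ofReal (heatKernel N 1 0 z * ‖z‖ ^ (-γ)))
  have hg : Measurable g := Measurable.indicator (by fun_prop) measurableSet_ball
  have hI : heatI N γ R = ∫⁻ z, g z := (lintegral_indicator measurableSet_ball _).symm
  have hscale : ∫⁻ y, g (ρ⁻¹ • (y - x₀)) = ENNReal.ofReal (ρ ^ N) * ∫⁻ z, g z := by
    rw [lintegral_sub_right_eq_self (fun y => g (ρ⁻¹ • y)) x₀,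
      ← lintegral_map hg (by fun_prop : Measurable (fun y : EuclideanSpace ℝ (Fin N) => ρ⁻¹ • y)),
      Measure.map_addHaar_smul volume (inv_ne_zero hρ.ne'), lintegral_smul_measure,
      finrank_euclideanSpace_fin, smul_eq_mul]
    congr 2
    rw [inv_pow, inv_inv, abs_of_pos (by positivity)]
  have hc : ENNReal.ofReal (μ * ρ ^ (-γ)) * heatI N γ R =
      ∫⁻ y, ENNReal.ofReal (μ * ρ ^ (-γ) * (ρ ^ N)⁻¹) * g (ρ⁻¹ • (y - x₀)) := by
    have hm : Measurable (fun y => g (ρ⁻¹ • (y - x₀))) := by fun_prop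
    rw [lintegral_const_mul _ hm, hscale, hI, ← mul_assoc,
      ← ENNReal.ofReal_mul (by positivity)]
    congr 2
    field_simp
  rw [hc]
  refine lintegral_mono_ae ?_
  filter_upwards [hlow] with y hy
  by_cases hyR : ρ⁻¹ • (y - x₀) ∈ Metric.ball (0 : EuclideanSpace ℝ (Fin N)) R
  · have hn : ‖ρ⁻¹ • (y - x₀)‖ = ρ⁻¹ * ‖y - x₀‖ := by
      rw [norm_smul, Real.norm_of_nonneg (by positivity)]
    have h1 : ‖y - x₀‖ ≤ δ := by
      rw [mem_ball_zero_iff, hn, inv_mul_lt_iff₀ hρ] at hyR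
      linarith
    have h2 := hy h1
    simp only [g, indicator_of_mem hyR]
    rw [← ENNReal.ofReal_mul (by positivity)]
    refine ENNReal.ofReal_le_ofReal ?_
    refine le_trans (le_of_eq ?_)
      (mul_le_mul_of_nonneg_left h2 (heatKernel_nonneg (by positivity) _ _))
    unfold heatKernel
    rw [zero_sub, norm_neg, hn, norm_sub_rev x₀ y, Real.mul_rpow (by positivity) (norm_nonneg _),
      mul_one, mul_one, Real.mul_rpow (x := 4 * π) (by positivity) (by positivity),
      Real.inv_rpow hρ.le]
    have e1 : (ρ ^ 2) ^ (-(N:ℝ) / 2) = (ρ ^ N)⁻¹ := by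
      rw [← Real.rpow_natCast ρ 2, ← Real.rpow_mul hρ.le, ← Real.rpow_natCast ρ N,
        ← Real.rpow_neg hρ.le]
      congr 1; push_cast; ring
    have e2 : -(ρ⁻¹ * ‖y - x₀‖) ^ 2 / 4 = -‖y - x₀‖ ^ 2 / (4 * ρ ^ 2) := by
      field_simp
    rw [e1, e2]
    have : ρ ^ (-γ) ≠ 0 := (Real.rpow_pos_of_pos hρ _).ne'
    field_simp
  · simp [g, indicator_of_notMem hyR]

lemma heatI_top {N : ℕ} (hN : 1 ≤ N) {γ : ℝ} (h : (N : ℝ) ≤ γ) : heatI N γ 1 = ⊤ := by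
  by_contra hcon
  have : Nonempty (Fin N) := ⟨⟨0, hN⟩⟩
  unfold heatI at hcon
  rw [← ne_eq, lintegral_ofReal_ne_top_iff_integrable (by fun_prop)
    (ae_of_all _ fun z => mul_nonneg (heatKernel_nonneg one_pos _ _) (by positivity))] at hcon
  have h1 : IntegrableOn (fun z : EuclideanSpace ℝ (Fin N) =>
      (fun r : ℝ => (4 * π * 1) ^ (-(N : ℝ) / 2) * rexp (-r ^ 2 / (4 * 1)) * r ^ (-γ)) ‖z‖)
      (Metric.ball 0 1) volume := by
    refine hcon.congr (ae_of_all _ fun z => ?_)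
    simp [heatKernel]
  replace h1 := (integrableOn_fun_norm_addHaar volume (f := fun r : ℝ =>
    (4 * π * 1) ^ (-(N : ℝ) / 2) * rexp (-r ^ 2 / (4 * 1)) * r ^ (-γ))).1 h1
  rw [finrank_euclideanSpace_fin] at h1
  have h2 : IntegrableOn (fun y : ℝ => y ^ ((N : ℝ) - 1 - γ)) (Ioo 0 1) := by
    refine Integrable.mono' (h1.const_mul ((4 * π * 1) ^ ((N : ℝ) / 2) * rexp 1)) (by fun_prop) ?_
    refine (ae_restrict_iff' measurableSet_Ioo).2 (ae_of_all _ fun y hy => ?_)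
    have hy0 : 0 < y := hy.1
    have e1 : y ^ ((N : ℝ) - 1 - γ) = y ^ (N - 1) * y ^ (-γ) := by
      rw [← Real.rpow_natCast, ← Real.rpow_add hy0]
      congr 1; push_cast [hN]; ring
    have e2 : (4 * π * 1) ^ (-(N : ℝ) / 2) = ((4 * π * 1) ^ ((N : ℝ) / 2))⁻¹ := by
      rw [neg_div, Real.rpow_neg (by positivity)]
    have e3 : (4 * π * 1) ^ ((N : ℝ) / 2) ≠ 0 := by positivity
    have e4 : 1 ≤ rexp 1 * rexp (-y ^ 2 / (4 * 1)) := by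
      rw [← Real.exp_add, Real.one_le_exp_iff]
      nlinarith [hy.1, hy.2]
    rw [Real.norm_of_nonneg (by positivity), e1, e2, smul_eq_mul]
    have e5 : 0 ≤ y ^ (N - 1) * y ^ (-γ) := by positivity
    calc y ^ (N - 1) * y ^ (-γ) = 1 * (y ^ (N - 1) * y ^ (-γ)) := by ring
      _ ≤ (rexp 1 * rexp (-y ^ 2 / (4 * 1))) * (y ^ (N - 1) * y ^ (-γ)) :=
        mul_le_mul_of_nonneg_right e4 e5
      _ = _ := by field_simp
  rw [intervalIntegral.integrableOn_Ioo_rpow_iff one_pos] at h2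
  linarith

lemma heatI_ae_pos {N : ℕ} (hN : 1 ≤ N) (γ : ℝ) :
    ∀ᵐ z : EuclideanSpace ℝ (Fin N), 0 < heatKernel N 1 0 z * ‖z‖ ^ (-γ) := by
  have : Nonempty (Fin N) := ⟨⟨0, hN⟩⟩
  filter_upwards [Measure.ae_ne volume 0] with z hz
  have := norm_pos_iff.2 hz
  have := heatKernel_pos one_pos 0 z
  positivity

lemma heatI_pos {N : ℕ} (hN : 1 ≤ N) (γ : ℝ) : heatI N γ 1 ≠ 0 := by
  unfold heatI
  rw [Ne, lintegral_eq_zero_iff (by fun_prop)]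
  intro h
  have h2 := ae_restrict_of_ae (s := Metric.ball (0 : EuclideanSpace ℝ (Fin N)) 1)
    (heatI_ae_pos hN γ)
  have h3 : ∀ᵐ z ∂(volume.restrict (Metric.ball (0 : EuclideanSpace ℝ (Fin N)) 1)), False := by
    filter_upwards [h, h2] with z hz1 hz2
    simp only [Pi.zero_apply, ENNReal.ofReal_eq_zero] at hz1
    linarith
  rw [ae_iff] at h3
  simp only [not_false_eq_true, ofPred_true, Measure.restrict_apply_univ] at h3
  exact (Metric.measure_ball_pos volume (0 : EuclideanSpace ℝ (Fin N)) one_pos).ne' h3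

lemma heatI_crit {N : ℕ} (hN : 1 ≤ N) {α μ : ℝ} (hα : 0 < α) (hμ : 0 < μ)
    (h : (α ^ (1 / α) * ∫ y, heatKernel N 1 0 y * ‖y‖ ^ (-(2 / α)))⁻¹ < μ) :
    ∃ n : ℕ, 1 < ENNReal.ofReal (α ^ (1 / α) * μ) * heatI N (2 / α) n := by
  have hsup : ∫⁻ z, ENNReal.ofReal (heatKernel N 1 0 z * ‖z‖ ^ (-(2 / α))) =
      ⨆ n : ℕ, heatI N (2 / α) n := by
    unfold heatI
    rw [← setLIntegral_iUnion_of_directed, Metric.iUnion_ball_nat, setLIntegral_univ]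
    refine Monotone.directed_le fun a b hab => ?_
    exact Metric.ball_subset_ball (by exact_mod_cast hab)
  have hc : 0 < α ^ (1 / α) * μ := by positivity
  have hnn : 0 ≤ᵐ[volume] fun z : EuclideanSpace ℝ (Fin N) =>
      heatKernel N 1 0 z * ‖z‖ ^ (-(2 / α)) :=
    ae_of_all _ fun z => mul_nonneg (heatKernel_nonneg one_pos _ _) (by positivity)
  rw [← lt_iSup_iff, ← ENNReal.mul_iSup, ← hsup]
  by_cases hint : Integrable (fun z : EuclideanSpace ℝ (Fin N) =>
      heatKernel N 1 0 z * ‖z‖ ^ (-(2 / α))) volume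
  · rw [← ofReal_integral_eq_lintegral_ofReal hint hnn, ← ENNReal.ofReal_mul hc.le,
      ENNReal.one_lt_ofReal]
    have hpos : 0 < ∫ z : EuclideanSpace ℝ (Fin N), heatKernel N 1 0 z * ‖z‖ ^ (-(2 / α)) := by
      refine lt_of_le_of_ne (integral_nonneg_of_ae hnn) fun h0 => ?_
      have h1 := (integral_eq_zero_iff_of_nonneg_ae hnn hint).1 h0.symm
      have h3 : ∀ᵐ z : EuclideanSpace ℝ (Fin N), False := by
        filter_upwards [h1, heatI_ae_pos hN (2 / α)] with z hz1 hz2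
        simp only [Pi.zero_apply] at hz1
        linarith
      rw [ae_iff] at h3
      simp only [not_false_eq_true, ofPred_true] at h3
      exact (Metric.measure_ball_pos volume (0 : EuclideanSpace ℝ (Fin N)) one_pos).ne'
        (measure_mono_null (subset_univ _) h3)
    rw [inv_lt_iff_one_lt_mul₀ (by positivity)] at h
    linarith
  · have : ∫⁻ z : EuclideanSpace ℝ (Fin N),
        ENNReal.ofReal (heatKernel N 1 0 z * ‖z‖ ^ (-(2 / α))) = ⊤ := by
      by_contra hcon
      exact hint ((lintegral_ofReal_ne_top_iff_integrable (by fun_prop) hnn).1 hcon)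
    rw [this, ENNReal.mul_top (by simpa using hc)]
    exact ENNReal.one_lt_top

lemma exists_level {N : ℕ} (hN : 1 ≤ N) {α γ μ : ℝ} (hα : 0 < α) (hμ : 0 < μ)
    (hcond : ((N : ℝ) ≤ γ) ∨ (2 / α < γ) ∨
      (γ = 2 / α ∧ 2 / (N : ℝ) < α ∧
        (α ^ (1 / α) * ∫ y, heatKernel N 1 0 y * ‖y‖ ^ (-(2 / α)))⁻¹ < μ)) :
    ∃ R : ℝ, ∃ c : ℝ≥0∞, 1 < c ∧ ∀ᶠ ρ : ℝ in 𝓝[>] 0,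
      c ≤ ENNReal.ofReal (α ^ (1 / α) * μ * ρ ^ (2 / α - γ)) * heatI N γ R := by
  rcases hcond with h | h | ⟨rfl, -, h⟩
  · refine ⟨1, 2, by norm_num, ?_⟩
    filter_upwards [self_mem_nhdsWithin] with ρ hρ
    have hρ' : (0:ℝ) < ρ := hρ
    have : 0 < α ^ (1 / α) * μ * ρ ^ (2 / α - γ) := by positivity
    rw [heatI_top hN h, ENNReal.mul_top (by simpa using this)]
    exact le_top
  · refine ⟨1, 2, by norm_num, ?_⟩
    have h1 : Tendsto (fun ρ : ℝ => α ^ (1 / α) * μ * ρ ^ (2 / α - γ)) (𝓝[>] 0) atTop :=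
      (tendsto_rpow_neg_nhdsGT_zero (by linarith)).const_mul_atTop (by positivity)
    have h2 := ENNReal.Tendsto.mul_const (b := heatI N γ 1) (ENNReal.tendsto_ofReal_atTop.comp h1)
      (Or.inl ENNReal.top_ne_zero)
    rw [ENNReal.top_mul (heatI_pos hN γ)] at h2
    exact h2.eventually (Ici_mem_nhds (by simp))
  · obtain ⟨n, hn⟩ := heatI_crit hN hα hμ h
    refine ⟨n, _, hn, Eventually.of_forall fun ρ => ?_⟩
    simp

theorem stmt3 (N : ℕ) (hN : 1 ≤ N) (α γ μ : ℝ) (hα : 0 < α) (hγ : 0 < γ) (hμ : 0 < μ)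
    (hcond : ((N : ℝ) ≤ γ) ∨ (2 / α < γ) ∨
      (γ = 2 / α ∧ 2 / (N : ℝ) < α ∧
        (α ^ (1 / α) * ∫ y, heatKernel N 1 0 y * ‖y‖ ^ (-(2 / α)))⁻¹ < μ))
    (x₀ : EuclideanSpace ℝ (Fin N)) (δ : ℝ) (hδ : 0 < δ)
    (u₀ : EuclideanSpace ℝ (Fin N) → ℝ) (hu₀m : Measurable u₀) (hu₀ : ∀ x, 0 ≤ u₀ x)
    (hlow : ∀ᵐ x ∂volume, ‖x - x₀‖ ≤ δ → μ * ‖x - x₀‖ ^ (-γ) ≤ u₀ x) :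
    (1 < Filter.limsup (fun t : ℝ => ENNReal.ofReal ((α * t) ^ (1 / α)) *
      essSup (fun x => ∫⁻ y, ENNReal.ofReal (heatKernel N t x y * u₀ y)) volume)
      (nhdsWithin 0 (Ioi 0))) ∧
    ∀ T > (0 : ℝ), ¬ ∃ u : ℝ → EuclideanSpace ℝ (Fin N) → ℝ,
      Measurable (Function.uncurry u) ∧
      (∀ t ∈ Ioo 0 T, ∀ x, 0 ≤ u t x) ∧
      (∀ᵐ p : ℝ × EuclideanSpace ℝ (Fin N) ∂volume, p.1 ∈ Ioo 0 T →
        ENNReal.ofReal (u p.1 p.2) =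
          (∫⁻ y, ENNReal.ofReal (heatKernel N p.1 p.2 y * u₀ y)) +
          ∫⁻ s in Ioo (0 : ℝ) p.1, ∫⁻ y,
            ENNReal.ofReal (heatKernel N (p.1 - s) p.2 y * u s y ^ (α + 1))) := by
  obtain ⟨R, c, hc, hev⟩ := exists_level hN hα hμ hcond
  have hsqrt : Tendsto Real.sqrt (𝓝[>] 0) (𝓝[>] 0) := by
    refine tendsto_nhdsWithin_iff.2 ⟨?_, ?_⟩
    · have := (Real.continuous_sqrt.tendsto 0).mono_left (nhdsWithin_le_nhds (s := Ioi 0))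
      rwa [Real.sqrt_zero] at this
    · filter_upwards [self_mem_nhdsWithin] with t ht
      exact Real.sqrt_pos.2 ht
  have hR : ∀ᶠ ρ : ℝ in 𝓝[>] 0, ρ * R ≤ δ := by
    have : Tendsto (fun ρ : ℝ => ρ * R) (𝓝[>] 0) (𝓝 0) := by
      have h := ((by fun_prop : Continuous fun ρ : ℝ => ρ * R).tendsto 0).mono_left (nhdsWithin_le_nhds (s := Ioi 0))
      rwa [zero_mul] at h
    exact (this.eventually (gt_mem_nhds hδ)).mono fun ρ h => h.le
  have hkey : ∀ᶠ t : ℝ in 𝓝[>] 0, c ≤ ENNReal.ofReal ((α * t) ^ (1 / α)) *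
      ∫⁻ y, ENNReal.ofReal (heatKernel N t x₀ y * u₀ y) := by
    filter_upwards [hsqrt.eventually hev, hsqrt.eventually hR, self_mem_nhdsWithin] with t h1 h2 ht
    have hρ : 0 < √t := Real.sqrt_pos.2 ht
    have ht2 : t = √t ^ 2 := (Real.sq_sqrt (le_of_lt ht)).symm
    generalize √t = ρ at *
    subst ht2
    have h3 := lower_heat hμ hρ h2 x₀ u₀ hlow
    refine h1.trans (le_trans (le_of_eq ?_) (mul_le_mul_right h3 _))
    rw [← mul_assoc, ← ENNReal.ofReal_mul (by positivity)]
    congr 2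
    rw [Real.mul_rpow hα.le (by positivity), ← Real.rpow_natCast ρ 2, ← Real.rpow_mul hρ.le,
      Real.rpow_sub hρ, Real.rpow_neg hρ.le]
    have : ((2:ℕ) : ℝ) * (1 / α) = 2 / α := by push_cast; ring
    rw [this]; ring
  constructor
  · refine hc.trans_le (le_limsup_of_frequently_le' (Eventually.frequently ?_))
    filter_upwards [hkey, self_mem_nhdsWithin] with t h ht
    exact h.trans (mul_le_mul_right (le_essSup_heat ht u₀ hu₀m x₀) _)
  · rintro T hT ⟨u, hum, hu, hsol⟩
    have hae := sol_ae_bound hα u₀ hu₀m u hum hu hsol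
    obtain ⟨t, h, ht⟩ := (hkey.and (Ioo_mem_nhdsGT hT)).exists
    exact absurd (sol_bound hα u₀ hu₀m hae t ht x₀) (not_le.2 (hc.trans_le h))
end

section
/- Let N ≥ 1 be an integer, δ > 0, and let m ≥ 2 be an integer. Define h(s,x) = (|x|^{-2} + 1) Σ_{j=1}^{m} s^{(j-1)/2} χ_j(x) + (1+s) s^{(m-2)/2} for s > 0, x ∈ ℝ^N, with the χ_j as in the context. Then for every t > 0 and every x ∈ ℝ^N, ∫₀ᵗ (e^{(t-s)Δ} h(s,·))(x) ds ≤ t^{1/2}(1 + a_m^{-2}) ( t^{m/2} + Σ_{j=2}^{m} t^{(j-1)/2} χ_j(x) ) + m 2^{N/2} (1 + a_m^{-2}) (1 + t^{(m+1)/2}) exp(-a_{m+1}²/(8t)) + 2 (1/m + t/(m+2)) t^{m/2}. -/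
open MeasureTheory Real Set Filter ENNReal

/-- `a_j = 2^{-j} δ`. -/
noncomputable def aCoef (δ : ℝ) (j : ℕ) : ℝ := 2 ^ (-(j : ℝ)) * δ

/-- The cutoff function `χ_j(x) = θ(|x|/a_j)`. -/
noncomputable def cut (θ : ℝ → ℝ) (δ : ℝ) (j : ℕ) {N : ℕ}
    (x : EuclideanSpace ℝ (Fin N)) : ℝ :=
  θ (‖x‖ / aCoef δ j)

/-- `h(s,x) = (|x|^{-2} + 1) Σ_{j=1}^{m} s^{(j-1)/2} χ_j(x) + (1+s) s^{(m-2)/2}`. -/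
noncomputable def hFun (θ : ℝ → ℝ) (δ : ℝ) (m : ℕ) {N : ℕ} (s : ℝ)
    (x : EuclideanSpace ℝ (Fin N)) : ℝ :=
  (‖x‖ ^ (-(2 : ℝ)) + 1) * (∑ j ∈ Finset.Icc 1 m, s ^ (((j : ℝ) - 1) / 2) * cut θ δ j x) +
    (1 + s) * s ^ (((m : ℝ) - 2) / 2)

lemma gauss_aux (N : ℕ) (c : ℝ) (hc : 0 < c) (x : EuclideanSpace ℝ (Fin N)) :
    ∫⁻ y, ENNReal.ofReal (Real.exp (-‖x - y‖ ^ 2 / c)) = ENNReal.ofReal ((π * c) ^ ((N : ℝ) / 2)) := by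
  have h1 := GaussianFourier.integral_rexp_neg_mul_sq_norm (V := EuclideanSpace ℝ (Fin N))
    (inv_pos.mpr hc)
  have h2 : ∫⁻ y, ENNReal.ofReal (Real.exp (-‖x - y‖ ^ 2 / c)) =
      ∫⁻ y : EuclideanSpace ℝ (Fin N), ENNReal.ofReal (Real.exp (-c⁻¹ * ‖y‖ ^ 2)) := by
    rw [← lintegral_sub_left_eq_self
      (fun y : EuclideanSpace ℝ (Fin N) => ENNReal.ofReal (Real.exp (-c⁻¹ * ‖y‖ ^ 2))) x]
    refine lintegral_congr fun y => ?_
    congr 2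
    field_simp
  have hpos : 0 < (π / c⁻¹) ^ ((Module.finrank ℝ (EuclideanSpace ℝ (Fin N)) : ℝ) / 2) := by
    positivity
  have hint : Integrable (fun y : EuclideanSpace ℝ (Fin N) => Real.exp (-c⁻¹ * ‖y‖ ^ 2)) := by
    refine Integrable.of_integral_ne_zero ?_
    rw [h1]; exact hpos.ne'
  rw [h2, ← ofReal_integral_eq_lintegral_ofReal hint
    (Eventually.of_forall fun y => (Real.exp_pos _).le), h1]
  simp

lemma aCoef_pos (δ : ℝ) (hδ : 0 < δ) (j : ℕ) : 0 < aCoef δ j := by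
  unfold aCoef; positivity

lemma aCoef_anti (δ : ℝ) (hδ : 0 < δ) {i j : ℕ} (h : i ≤ j) : aCoef δ j ≤ aCoef δ i := by
  unfold aCoef
  have : (i : ℝ) ≤ j := by exact_mod_cast h
  gcongr
  norm_num

lemma aCoef_succ (δ : ℝ) (j : ℕ) : aCoef δ j = 2 * aCoef δ (j + 1) := by
  unfold aCoef
  push_cast
  rw [neg_add, Real.rpow_add (by norm_num), Real.rpow_neg_one]
  ring

lemma cut_bound (θ : ℝ → ℝ) (hθmono : Monotone θ)
    (hθ0 : ∀ s ≤ (1 : ℝ), θ s = 0) (hθ1 : ∀ s : ℝ, 2 ≤ s → θ s = 1) :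
    (∀ s, 0 ≤ θ s) ∧ ∀ s, θ s ≤ 1 := by
  constructor
  · intro s
    rw [← hθ0 (min s 1) (min_le_right _ _)]
    exact hθmono (min_le_left _ _)
  · intro s
    rw [← hθ1 (max s 2) (le_max_right _ _)]
    exact hθmono (le_max_left _ _)

lemma key_pt {N : ℕ} (θ : ℝ → ℝ) (δ : ℝ) (hδ : 0 < δ) (hθmono : Monotone θ)
    (hθ0 : ∀ s ≤ (1 : ℝ), θ s = 0) (hθ1 : ∀ s : ℝ, 2 ≤ s → θ s = 1)
    (m j : ℕ) (hj : j ≤ m) (t T : ℝ) (hT : 0 < T) (hTt : T ≤ t)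
    (x y : EuclideanSpace ℝ (Fin N)) :
    Real.exp (-‖x - y‖ ^ 2 / (4 * T)) * ((‖y‖ ^ (-(2 : ℝ)) + 1) * cut θ δ j y) ≤
      (1 + (aCoef δ m) ^ (-(2 : ℝ))) * (Real.exp (-‖x - y‖ ^ 2 / (4 * T)) * cut θ δ (j + 1) x +
        Real.exp (-(aCoef δ (m + 1)) ^ 2 / (8 * t)) * Real.exp (-‖x - y‖ ^ 2 / (8 * T))) := by
  obtain ⟨p0, p1⟩ := cut_bound θ hθmono hθ0 hθ1
  have haj := aCoef_pos δ hδ j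
  have ham := aCoef_pos δ hδ m
  have haj1 := aCoef_pos δ hδ (j + 1)
  have ham1 := aCoef_pos δ hδ (m + 1)
  have hx0 : 0 ≤ cut θ δ (j + 1) x := p0 _
  have hK : 0 < (aCoef δ m) ^ (-(2 : ℝ)) := by positivity
  have hR : 0 ≤ (1 + (aCoef δ m) ^ (-(2 : ℝ))) * (Real.exp (-‖x - y‖ ^ 2 / (4 * T)) * cut θ δ (j + 1) x +
        Real.exp (-(aCoef δ (m + 1)) ^ 2 / (8 * t)) * Real.exp (-‖x - y‖ ^ 2 / (8 * T))) := by
    positivity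
  by_cases hy : ‖y‖ ≤ aCoef δ j
  · have : cut θ δ j y = 0 := hθ0 _ (by rw [div_le_one haj]; exact hy)
    rw [this]; simpa using hR
  push Not at hy
  have h1 : ‖y‖ ^ (-(2 : ℝ)) ≤ (aCoef δ m) ^ (-(2 : ℝ)) :=
    Real.rpow_le_rpow_of_nonpos ham ((aCoef_anti δ hδ hj).trans hy.le) (by norm_num)
  have h2 : Real.exp (-‖x - y‖ ^ 2 / (4 * T)) * cut θ δ j y ≤
      Real.exp (-‖x - y‖ ^ 2 / (4 * T)) * cut θ δ (j + 1) x +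
        Real.exp (-(aCoef δ (m + 1)) ^ 2 / (8 * t)) * Real.exp (-‖x - y‖ ^ 2 / (8 * T)) := by
    by_cases hxy : ‖y‖ ≤ 2 * ‖x‖
    · have : cut θ δ j y ≤ cut θ δ (j + 1) x := by
        apply hθmono
        rw [aCoef_succ, div_le_div_iff₀ (by positivity) haj1]
        nlinarith
      have := mul_le_mul_of_nonneg_left this (Real.exp_pos (-‖x - y‖ ^ 2 / (4 * T))).le
      have : 0 ≤ Real.exp (-(aCoef δ (m + 1)) ^ 2 / (8 * t)) * Real.exp (-‖x - y‖ ^ 2 / (8 * T)) := by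
        positivity
      linarith
    · push Not at hxy
      have hd : aCoef δ (m + 1) ≤ ‖x - y‖ := by
        have h3 := norm_sub_norm_le y x
        rw [norm_sub_rev] at h3
        have h4 : aCoef δ (m + 1) ≤ aCoef δ (j + 1) := aCoef_anti δ hδ (by omega)
        have h5 := aCoef_succ δ j
        linarith
      have e1 : Real.exp (-‖x - y‖ ^ 2 / (4 * T)) =
          Real.exp (-‖x - y‖ ^ 2 / (8 * T)) * Real.exp (-‖x - y‖ ^ 2 / (8 * T)) := by
        rw [← Real.exp_add]; congr 1; field_simp; ring
      have e2 : Real.exp (-‖x - y‖ ^ 2 / (8 * T)) ≤ Real.exp (-(aCoef δ (m + 1)) ^ 2 / (8 * t)) := by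
        apply Real.exp_le_exp.mpr
        rw [neg_div, neg_div, neg_le_neg_iff]
        gcongr
      calc _ ≤ Real.exp (-‖x - y‖ ^ 2 / (4 * T)) * 1 := by
            gcongr; exact p1 _
        _ ≤ Real.exp (-(aCoef δ (m + 1)) ^ 2 / (8 * t)) * Real.exp (-‖x - y‖ ^ 2 / (8 * T)) := by
            rw [mul_one, e1]; gcongr
        _ ≤ _ := by
            have : 0 ≤ Real.exp (-‖x - y‖ ^ 2 / (4 * T)) * cut θ δ (j + 1) x := by positivity
            linarith
  have hy0 : 0 ≤ cut θ δ j y := p0 _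
  calc _ = (‖y‖ ^ (-(2 : ℝ)) + 1) * (Real.exp (-‖x - y‖ ^ 2 / (4 * T)) * cut θ δ j y) := by ring
    _ ≤ (1 + (aCoef δ m) ^ (-(2 : ℝ))) * (Real.exp (-‖x - y‖ ^ 2 / (4 * T)) * cut θ δ j y) := by
      gcongr ?_ * _; linarith
    _ ≤ _ := by gcongr

/-- The time integrand majorant. -/
noncomputable def Fmaj (θ : ℝ → ℝ) (δ : ℝ) (m : ℕ) {N : ℕ} (t : ℝ)
    (x : EuclideanSpace ℝ (Fin N)) (s : ℝ) : ℝ :=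
  (∑ j ∈ Finset.Icc 1 m, (1 + (aCoef δ m) ^ (-(2 : ℝ))) * (cut θ δ (j + 1) x +
    2 ^ ((N : ℝ) / 2) * Real.exp (-(aCoef δ (m + 1)) ^ 2 / (8 * t))) * s ^ (((j : ℝ) - 1) / 2)) +
    (s ^ (((m : ℝ) - 2) / 2) + s ^ ((m : ℝ) / 2))

lemma inner_bound {N : ℕ} (θ : ℝ → ℝ) (δ : ℝ) (hδ : 0 < δ) (hθmono : Monotone θ)
    (hθ0 : ∀ s ≤ (1 : ℝ), θ s = 0) (hθ1 : ∀ s : ℝ, 2 ≤ s → θ s = 1)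
    (m : ℕ) (t s : ℝ) (hs : 0 < s) (hst : s < t) (x : EuclideanSpace ℝ (Fin N)) :
    ∫⁻ y, ENNReal.ofReal (heatKernel N (t - s) x y * hFun θ δ m s y) ≤
      ENNReal.ofReal (Fmaj θ δ m t x s) := by
  obtain ⟨p0, p1⟩ := cut_bound θ hθmono hθ0 hθ1
  obtain ⟨T, hTdef⟩ : ∃ T, T = t - s := ⟨_, rfl⟩
  rw [← hTdef]
  have hT : 0 < T := by linarith
  have hTt : T ≤ t := by linarith
  have ham := aCoef_pos δ hδ m
  set K := 1 + (aCoef δ m) ^ (-(2 : ℝ)) with hK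
  have hKpos : 0 < K := by positivity
  set E := Real.exp (-(aCoef δ (m + 1)) ^ 2 / (8 * t)) with hE
  have hEpos : 0 < E := Real.exp_pos _
  set c := (4 * π * T) ^ (-(N : ℝ) / 2) with hc
  have hcpos : 0 < c := by positivity
  set A := (∑ j ∈ Finset.Icc 1 m, s ^ (((j : ℝ) - 1) / 2) * (K * cut θ δ (j + 1) x)) +
    (1 + s) * s ^ (((m : ℝ) - 2) / 2) with hA
  set B := ∑ j ∈ Finset.Icc 1 m, s ^ (((j : ℝ) - 1) / 2) * (K * E) with hB
  have hA0 : 0 ≤ A := by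
    have : ∀ j, 0 ≤ cut θ δ j x := fun j => p0 _
    refine add_nonneg (Finset.sum_nonneg fun j _ => ?_) (by positivity)
    have := this (j + 1)
    positivity
  have hB0 : 0 ≤ B := Finset.sum_nonneg fun j _ => by positivity
  have hpt : ∀ y, heatKernel N T x y * hFun θ δ m s y ≤
      c * A * Real.exp (-‖x - y‖ ^ 2 / (4 * T)) + c * B * Real.exp (-‖x - y‖ ^ 2 / (8 * T)) := by
    intro y
    have : Real.exp (-‖x - y‖ ^ 2 / (4 * T)) * hFun θ δ m s y ≤
        A * Real.exp (-‖x - y‖ ^ 2 / (4 * T)) + B * Real.exp (-‖x - y‖ ^ 2 / (8 * T)) := by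
      unfold hFun
      rw [hA, hB, mul_add, Finset.mul_sum, Finset.mul_sum, add_mul (∑ j ∈ _, _), Finset.sum_mul, Finset.sum_mul,
        add_right_comm, ← Finset.sum_add_distrib]
      refine add_le_add (Finset.sum_le_sum fun j hj => ?_) (le_of_eq (by ring))
      have hk := key_pt θ δ hδ hθmono hθ0 hθ1 m j (Finset.mem_Icc.mp hj).2 t T hT hTt x y
      have := mul_le_mul_of_nonneg_left hk (by positivity : 0 ≤ s ^ (((j : ℝ) - 1) / 2))
      rw [← hK, ← hE] at this
      linarith
    unfold heatKernel
    rw [← hc]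
    have := mul_le_mul_of_nonneg_left this hcpos.le
    linarith
  have c4 : c * (π * (4 * T)) ^ ((N : ℝ) / 2) = 1 := by
    rw [hc, show π * (4 * T) = 4 * π * T by ring, ← Real.rpow_add (by positivity),
      show -(N : ℝ) / 2 + (N : ℝ) / 2 = 0 by ring]
    exact Real.rpow_zero _
  have c8 : c * (π * (8 * T)) ^ ((N : ℝ) / 2) = 2 ^ ((N : ℝ) / 2) := by
    rw [show π * (8 * T) = 2 * (π * (4 * T)) by ring, Real.mul_rpow (by norm_num) (by positivity)]
    linear_combination (2 : ℝ) ^ ((N : ℝ) / 2) * c4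
  calc _ ≤ ∫⁻ y, (ENNReal.ofReal (c * A) * ENNReal.ofReal (Real.exp (-‖x - y‖ ^ 2 / (4 * T))) +
          ENNReal.ofReal (c * B) * ENNReal.ofReal (Real.exp (-‖x - y‖ ^ 2 / (8 * T)))) := by
        refine lintegral_mono fun y => ?_
        rw [← ENNReal.ofReal_mul (by positivity), ← ENNReal.ofReal_mul (by positivity),
          ← ENNReal.ofReal_add (by positivity) (by positivity)]
        exact ENNReal.ofReal_le_ofReal (hpt y)
    _ = ENNReal.ofReal (A + B * 2 ^ ((N : ℝ) / 2)) := by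
        rw [lintegral_add_left (by fun_prop), lintegral_const_mul _ (by fun_prop),
          lintegral_const_mul _ (by fun_prop), gauss_aux N _ (by positivity),
          gauss_aux N _ (by positivity),
          ← ENNReal.ofReal_mul (by positivity), ← ENNReal.ofReal_mul (by positivity),
          ← ENNReal.ofReal_add (by positivity) (by positivity)]
        congr 1
        linear_combination A * c4 + B * c8
    _ = _ := by
        congr 1
        unfold Fmaj
        rw [hA, hB, Finset.sum_mul, add_right_comm, ← Finset.sum_add_distrib]
        congr 1
        · refine Finset.sum_congr rfl fun j _ => ?_
          rw [← hK, ← hE]; ring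
        · rw [show (m : ℝ) / 2 = 1 + ((m : ℝ) - 2) / 2 by ring, Real.rpow_add hs, Real.rpow_one]
          ring

/-- The estimate `∫₀ᵗ e^{(t-s)Δ} h(s,·) ds ≤ …` of Lemma 4.3. -/
theorem stmt5 (N : ℕ) (hN : 1 ≤ N) (δ : ℝ) (hδ : 0 < δ) (m : ℕ) (hm : 2 ≤ m)
    (θ : ℝ → ℝ) (hθsmooth : ContDiff ℝ (⊤ : ℕ∞) θ) (hθmono : Monotone θ)
    (hθ0 : ∀ s ≤ (1 : ℝ), θ s = 0) (hθ1 : ∀ s : ℝ, 2 ≤ s → θ s = 1)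
    (t : ℝ) (ht : 0 < t) (x : EuclideanSpace ℝ (Fin N)) :
    (∫⁻ s in Ioo (0 : ℝ) t, ∫⁻ y,
        ENNReal.ofReal (heatKernel N (t - s) x y * hFun θ δ m s y)) ≤
      ENNReal.ofReal (
        t ^ ((1 : ℝ) / 2) * (1 + (aCoef δ m) ^ (-(2 : ℝ))) *
          (t ^ ((m : ℝ) / 2) + ∑ j ∈ Finset.Icc 2 m, t ^ (((j : ℝ) - 1) / 2) * cut θ δ j x) +
        (m : ℝ) * 2 ^ ((N : ℝ) / 2) * (1 + (aCoef δ m) ^ (-(2 : ℝ))) *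
          (1 + t ^ (((m : ℝ) + 1) / 2)) * Real.exp (-(aCoef δ (m + 1)) ^ 2 / (8 * t)) +
        2 * (1 / (m : ℝ) + t / ((m : ℝ) + 2)) * t ^ ((m : ℝ) / 2)) := by
  obtain ⟨p0, p1⟩ := cut_bound θ hθmono hθ0 hθ1
  have hm' : (2 : ℝ) ≤ m := by exact_mod_cast hm
  have ham := aCoef_pos δ hδ m
  have hx0 : ∀ j, 0 ≤ cut θ δ j x := fun j => p0 _
  have hx1 : ∀ j, cut θ δ j x ≤ 1 := fun j => p1 _
  have hii : ∀ r : ℝ, -1 < r → IntervalIntegrable (fun s : ℝ => s ^ r) volume 0 t :=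
    fun r hr => intervalIntegral.intervalIntegrable_rpow' hr
  have hjr : ∀ j ∈ Finset.Icc 1 m, (-1 : ℝ) < ((j : ℝ) - 1) / 2 := by
    intro j hj
    have : (1 : ℝ) ≤ j := by exact_mod_cast (Finset.mem_Icc.mp hj).1
    linarith
  have hsum : IntervalIntegrable (fun s : ℝ => ∑ j ∈ Finset.Icc 1 m,
      (1 + (aCoef δ m) ^ (-(2 : ℝ))) * (cut θ δ (j + 1) x +
      2 ^ ((N : ℝ) / 2) * Real.exp (-(aCoef δ (m + 1)) ^ 2 / (8 * t))) * s ^ (((j : ℝ) - 1) / 2))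
      volume 0 t := by
    have := IntervalIntegrable.sum (μ := volume) (a := 0) (b := t) (Finset.Icc 1 m)
      (f := fun (j : ℕ) (s : ℝ) => (1 + (aCoef δ m) ^ (-(2 : ℝ))) * (cut θ δ (j + 1) x +
      2 ^ ((N : ℝ) / 2) * Real.exp (-(aCoef δ (m + 1)) ^ 2 / (8 * t))) * s ^ (((j : ℝ) - 1) / 2))
      (fun j hj => (hii _ (hjr j hj)).const_mul _)
    refine this.congr fun s _ => ?_
    simp only [Finset.sum_apply]
  have hF : IntervalIntegrable (Fmaj θ δ m t x) volume 0 t :=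
    hsum.add ((hii _ (by linarith)).add (hii _ (by linarith)))
  have hFval : ∫ s in (0 : ℝ)..t, Fmaj θ δ m t x s =
      (∑ j ∈ Finset.Icc 1 m, (1 + (aCoef δ m) ^ (-(2 : ℝ))) * (cut θ δ (j + 1) x +
      2 ^ ((N : ℝ) / 2) * Real.exp (-(aCoef δ (m + 1)) ^ 2 / (8 * t))) *
        (2 / ((j : ℝ) + 1) * t ^ (((j : ℝ) + 1) / 2))) +
      2 * (1 / (m : ℝ) + t / ((m : ℝ) + 2)) * t ^ ((m : ℝ) / 2) := by
    have hr : ∀ r : ℝ, -1 < r → ∫ s in (0 : ℝ)..t, s ^ r = t ^ (r + 1) / (r + 1) := by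
      intro r hr
      rw [integral_rpow (Or.inl hr), Real.zero_rpow (by linarith), sub_zero]
    unfold Fmaj
    rw [intervalIntegral.integral_add hsum ((hii _ (by linarith)).add (hii _ (by linarith))),
      intervalIntegral.integral_add (hii _ (by linarith)) (hii _ (by linarith)),
      intervalIntegral.integral_finsetSum (fun j hj => (hii _ (hjr j hj)).const_mul _)]
    congr 1
    · refine Finset.sum_congr rfl fun j hj => ?_
      rw [intervalIntegral.integral_const_mul, hr _ (hjr j hj),
        show ((j : ℝ) - 1) / 2 + 1 = ((j : ℝ) + 1) / 2 by ring]
      congr 1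
      field_simp
    · rw [hr _ (by linarith), hr _ (by linarith),
        show ((m : ℝ) - 2) / 2 + 1 = (m : ℝ) / 2 by ring, Real.rpow_add ht, Real.rpow_one]
      have : (m : ℝ) ≠ 0 := by linarith
      have : (m : ℝ) + 2 ≠ 0 := by linarith
      field_simp
  have hF0 : ∀ s ∈ Ioo (0 : ℝ) t, 0 ≤ Fmaj θ δ m t x s := by
    intro s hs
    have hs0 : 0 < s := hs.1
    unfold Fmaj
    refine add_nonneg (Finset.sum_nonneg fun j _ => ?_) (by positivity)
    have := hx0 (j + 1)
    positivity
  calc _ ≤ ∫⁻ s in Ioo (0 : ℝ) t, ENNReal.ofReal (Fmaj θ δ m t x s) :=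
        setLIntegral_mono' measurableSet_Ioo fun s hs =>
          inner_bound θ δ hδ hθmono hθ0 hθ1 m t s hs.1 hs.2 x
    _ = ENNReal.ofReal (∫ s in (0 : ℝ)..t, Fmaj θ δ m t x s) := by
        rw [intervalIntegral.integral_of_le ht.le, integral_Ioc_eq_integral_Ioo]
        symm
        apply ofReal_integral_eq_lintegral_ofReal
        · exact ((intervalIntegrable_iff_integrableOn_Ioo_of_le ht.le).mp hF)
        · exact (ae_restrict_iff' measurableSet_Ioo).mpr (Eventually.of_forall hF0)
    _ ≤ _ := by
        apply ENNReal.ofReal_le_ofReal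
        rw [hFval]
        gcongr ?_ + _
        set K := 1 + (aCoef δ m) ^ (-(2 : ℝ)) with hK
        have hKpos : 0 < K := by positivity
        set E := Real.exp (-(aCoef δ (m + 1)) ^ 2 / (8 * t)) with hE
        have hEpos : 0 < E := Real.exp_pos _
        have step : ∀ j ∈ Finset.Icc 1 m, K * (cut θ δ (j + 1) x + 2 ^ ((N : ℝ) / 2) * E) *
            (2 / ((j : ℝ) + 1) * t ^ (((j : ℝ) + 1) / 2)) ≤
            t ^ ((1 : ℝ) / 2) * K * (t ^ ((((j + 1 : ℕ) : ℝ) - 1) / 2) * cut θ δ (j + 1) x) +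
            2 ^ ((N : ℝ) / 2) * K * (1 + t ^ (((m : ℝ) + 1) / 2)) * E := by
          intro j hj
          have hj1 : (1 : ℝ) ≤ j := by exact_mod_cast (Finset.mem_Icc.mp hj).1
          have hjm : (j : ℝ) ≤ m := by exact_mod_cast (Finset.mem_Icc.mp hj).2
          have q0 := hx0 (j + 1)
          have q1 : 2 / ((j : ℝ) + 1) * t ^ (((j : ℝ) + 1) / 2) ≤ t ^ (((j : ℝ) + 1) / 2) := by
            apply mul_le_of_le_one_left (by positivity)
            rw [div_le_one (by positivity)]; linarith
          have q2 : t ^ (((j : ℝ) + 1) / 2) ≤ 1 + t ^ (((m : ℝ) + 1) / 2) := by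
            rcases le_total t 1 with h | h
            · have := Real.rpow_le_one ht.le h (by positivity : 0 ≤ ((j : ℝ) + 1) / 2)
              have : 0 ≤ t ^ (((m : ℝ) + 1) / 2) := by positivity
              linarith
            · have := Real.rpow_le_rpow_of_exponent_le h
                (by linarith : ((j : ℝ) + 1) / 2 ≤ ((m : ℝ) + 1) / 2)
              linarith
          have q3 : t ^ (((j : ℝ) + 1) / 2) =
              t ^ ((1 : ℝ) / 2) * t ^ ((((j + 1 : ℕ) : ℝ) - 1) / 2) := by
            rw [← Real.rpow_add ht]; congr 1; push_cast; ring
          calc _ ≤ K * (cut θ δ (j + 1) x + 2 ^ ((N : ℝ) / 2) * E) * t ^ (((j : ℝ) + 1) / 2) := by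
                gcongr
            _ = K * cut θ δ (j + 1) x * t ^ (((j : ℝ) + 1) / 2) +
                2 ^ ((N : ℝ) / 2) * K * t ^ (((j : ℝ) + 1) / 2) * E := by ring
            _ ≤ K * cut θ δ (j + 1) x * t ^ (((j : ℝ) + 1) / 2) +
                2 ^ ((N : ℝ) / 2) * K * (1 + t ^ (((m : ℝ) + 1) / 2)) * E := by gcongr
            _ = _ := by rw [q3]; ring
        refine (Finset.sum_le_sum step).trans ?_
        rw [Finset.sum_add_distrib, ← Finset.mul_sum, Finset.sum_const, Nat.card_Icc]
        have reidx : ∑ j ∈ Finset.Icc 1 m, t ^ ((((j + 1 : ℕ) : ℝ) - 1) / 2) * cut θ δ (j + 1) x =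
            (∑ j ∈ Finset.Icc 2 m, t ^ (((j : ℝ) - 1) / 2) * cut θ δ j x) +
              t ^ ((m : ℝ) / 2) * cut θ δ (m + 1) x := by
          have e : ∑ j ∈ Finset.Icc 1 m, t ^ ((((j + 1 : ℕ) : ℝ) - 1) / 2) * cut θ δ (j + 1) x =
              ∑ j ∈ Finset.Icc 2 (m + 1), t ^ (((j : ℝ) - 1) / 2) * cut θ δ j x := by
            rw [← Finset.Ico_add_one_right_eq_Icc, ← Finset.Ico_add_one_right_eq_Icc]
            exact Finset.sum_Ico_add' (fun j : ℕ => t ^ (((j : ℝ) - 1) / 2) * cut θ δ j x) 1 (m + 1) 1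
          rw [e, Finset.sum_Icc_succ_top (by omega)]
          congr 3
          push_cast; ring
        rw [reidx]
        have last : t ^ ((m : ℝ) / 2) * cut θ δ (m + 1) x ≤ t ^ ((m : ℝ) / 2) :=
          mul_le_of_le_one_right (by positivity) (hx1 _)
        refine add_le_add ?_ (le_of_eq ?_)
        · refine mul_le_mul_of_nonneg_left ?_ (by positivity)
          linarith
        · simp only [Nat.add_sub_cancel, nsmul_eq_mul]
          ring
end
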